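/- arXiv:2407.02365 — 3 statements merged into one kernel-verified Lean document; each statement's English description precedes it below -/
import Mathlib

section
/- Let N ≥ 1 be an integer and let s, w, a₁, …, a_N ∈ ℂ satisfy Re(s) > N, Re(w) > 0, and Re(a_j) > 0 for j = 1, …, N. Then ζ_N(s, w | a₁,…,a_N) = (1/Γ(s)) ∫₀^∞ u^{s−1} e^{−wu} ∏_{j=1}^N (1 − e^{−a_j u})^{−1} du, and likewise ζ̃_N(s, w | a₁,…,a_N) = (1/Γ(s)) ∫₀^∞ u^{s−1} e^{−wu} ∏_{j=1}^N (1 + e^{−a_j u})^{−1} du. -/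
/-!
Expand each factor `(1 - ε_j e ^ (-a_j u))⁻¹`, where `ε_j = 1` for the Barnes zeta function and
`ε_j = -1` for the alternating one, as a geometric series. The integrand becomes a series over
multi-indices `n` with terms `(∏ ε_j ^ n_j) u ^ (s - 1) e ^ (-(w + ∑ n_j a_j) u)`, and by the Gamma
integral `∫ u ^ (s - 1) e ^ (-z u) du = Γ(s) z ^ (-s)` for `Re z > 0` integrating term by term gives
the Barnes series.

The interchange is dominated convergence: the absolute values of the terms sum to at most
`u ^ (Re s - 1) e ^ (-Re w u) ∏ (1 - e ^ (-Re a_j u))⁻¹`. As `(1 - e ^ (-x))⁻¹ ≤ 1 + x⁻¹`, each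
factor costs at most one power of `u` at the origin, which is affordable because `Re s > N`.
-/

open MeasureTheory

/-- The Barnes zeta function `ζ_N(s, w | a₁,…,a_N)`. -/
noncomputable def barnesZeta (N : ℕ) (s w : ℂ) (a : Fin N → ℂ) : ℂ :=
  ∑' n : Fin N → ℕ, (w + ∑ j, (n j : ℂ) * a j) ^ (-s)

/-- The alternating Barnes zeta function `ζ̃_N(s, w | a₁,…,a_N)`. -/
noncomputable def barnesZetaAlt (N : ℕ) (s w : ℂ) (a : Fin N → ℂ) : ℂ :=
  ∑' n : Fin N → ℕ, (-1 : ℂ) ^ (∑ j, n j) * (w + ∑ j, (n j : ℂ) * a j) ^ (-s)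

section MultiIndexSeries

variable {ι κ R : Type*} [Fintype ι] [NormedCommRing R]

lemma summable_norm_prod_pi {f : ι → κ → R} (hf : ∀ j, Summable fun k => ‖f j k‖) :
    Summable fun n : ι → κ => ‖∏ j, f j (n j)‖ := by
  revert f
  apply Fintype.induction_empty_option
    (P := fun ι _ => ∀ {f : ι → κ → R}, (∀ j, Summable fun k => ‖f j k‖) →
      Summable fun n : ι → κ => ‖∏ j, f j (n j)‖)
  · intro α β _ e ih f hf
    let _ := Fintype.ofEquiv β e.symm
    rw [← (e.arrowCongr (Equiv.refl κ)).summable_iff]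
    refine (ih fun j => hf (e j)).congr fun n => ?_
    simp [← e.prod_comp]
  · exact fun _ => .of_finite
  · intro α _ ih f hf
    rw [← Equiv.piOptionEquivProd.symm.summable_iff]
    refine ((hf none).mul_norm (ih fun j => hf (some j))).congr fun n => ?_
    simp [Fintype.prod_option, Equiv.piOptionEquivProd]

lemma hasSum_prod_pi {f : ι → κ → R} {c : ι → R} (hc : ∀ j, HasSum (f j) (c j))
    (hf : ∀ j, Summable fun k => ‖f j k‖) :
    HasSum (fun n : ι → κ => ∏ j, f j (n j)) (∏ j, c j) := by
  revert f c
  apply Fintype.induction_empty_option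
    (P := fun ι _ => ∀ {f : ι → κ → R} {c : ι → R}, (∀ j, HasSum (f j) (c j)) →
      (∀ j, Summable fun k => ‖f j k‖) → HasSum (fun n : ι → κ => ∏ j, f j (n j)) (∏ j, c j))
  · intro α β _ e ih f c hc hf
    let _ := Fintype.ofEquiv β e.symm
    rw [← (e.arrowCongr (Equiv.refl κ)).hasSum_iff, ← e.prod_comp]
    refine (ih (fun j => hc (e j)) fun j => hf (e j)).congr_fun fun n => ?_
    simp [← e.prod_comp]
  · simp
  · intro α _ ih f c hc hf
    have hsome := ih (fun j => hc (some j)) fun j => hf (some j)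
    have hsum := summable_mul_of_summable_norm' (hf none) (hc none).summable
      (summable_norm_prod_pi fun j => hf (some j)) hsome.summable
    rw [← Equiv.piOptionEquivProd.symm.hasSum_iff, Fintype.prod_option]
    refine ((hc none).mul hsome hsum).congr_fun fun n => ?_
    simp [Fintype.prod_option, Equiv.piOptionEquivProd]

lemma hasSum_prod_pow {𝕜 : Type*} [NormedField 𝕜] {x : ι → 𝕜} (hx : ∀ j, ‖x j‖ < 1) :
    HasSum (fun n : ι → ℕ => ∏ j, x j ^ n j) (∏ j, (1 - x j)⁻¹) :=
  hasSum_prod_pi (fun j => hasSum_geometric_of_norm_lt_one (hx j))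
    fun j => summable_norm_geometric_of_norm_lt_one (hx j)

end MultiIndexSeries

section GammaIntegral

open Set Topology

lemma integrableOn_rpow_mul_exp_neg_mul {σ c : ℝ} (hσ : 0 < σ) (hc : 0 < c) :
    IntegrableOn (fun u : ℝ => u ^ (σ - 1) * Real.exp (-c * u)) (Ioi 0) := by
  simpa using integrableOn_rpow_mul_exp_neg_mul_rpow (s := σ - 1) (by linarith) one_pos hc

lemma norm_cpow_mul_cexp_neg_mul (s z : ℂ) {u : ℝ} (hu : 0 < u) :
    ‖(u : ℂ) ^ (s - 1) * Complex.exp (-z * u)‖ = u ^ (s.re - 1) * Real.exp (-z.re * u) := by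
  simp [Complex.norm_cpow_eq_rpow_re_of_pos hu, Complex.norm_exp]

lemma integrableOn_cpow_mul_cexp_neg_mul {s z : ℂ} (hs : 0 < s.re) (hz : 0 < z.re) :
    IntegrableOn (fun u : ℝ => (u : ℂ) ^ (s - 1) * Complex.exp (-z * u)) (Ioi 0) := by
  refine (integrableOn_rpow_mul_exp_neg_mul hs hz).mono'
    (Measurable.aestronglyMeasurable (by fun_prop)) ?_
  filter_upwards [ae_restrict_mem measurableSet_Ioi] with u hu
  exact (norm_cpow_mul_cexp_neg_mul s z hu).le

lemma differentiableAt_integral_cpow_mul_cexp_neg_mul {s z : ℂ} (hs : 0 < s.re) (hz : 0 < z.re) :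
    DifferentiableAt ℂ
      (fun z : ℂ => ∫ u in Ioi (0 : ℝ), (u : ℂ) ^ (s - 1) * Complex.exp (-z * u)) z := by
  have hball : {y : ℂ | z.re / 2 < y.re} ∈ 𝓝 z :=
    (isOpen_lt continuous_const Complex.continuous_re).mem_nhds (half_lt_self hz)
  refine (hasDerivAt_integral_of_dominated_loc_of_deriv_le hball
    (F := fun z (u : ℝ) => (u : ℂ) ^ (s - 1) * Complex.exp (-z * u))
    (F' := fun z u => (u : ℂ) ^ (s - 1) * (Complex.exp (-z * u) * (-u)))
    (bound := fun u : ℝ => u ^ ((s.re + 1) - 1) * Real.exp (-(z.re / 2) * u))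
    (.of_forall fun _ => Measurable.aestronglyMeasurable (by fun_prop))
    (integrableOn_cpow_mul_cexp_neg_mul hs hz)
    (Measurable.aestronglyMeasurable (by fun_prop)) ?_
    (integrableOn_rpow_mul_exp_neg_mul (by linarith) (half_pos hz)) ?_).2.differentiableAt
  · filter_upwards [ae_restrict_mem measurableSet_Ioi] with u (hu : 0 < u) y (hy : z.re / 2 < y.re)
    calc ‖(u : ℂ) ^ (s - 1) * (Complex.exp (-y * u) * (-u))‖
        = u ^ (s.re - 1) * Real.exp (-y.re * u) * u := by
          rw [← mul_assoc, norm_mul, norm_cpow_mul_cexp_neg_mul s y hu, norm_neg,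
            Complex.norm_real, Real.norm_of_nonneg hu.le]
      _ = u ^ ((s.re + 1) - 1) * Real.exp (-y.re * u) := by
          rw [add_sub_right_comm, Real.rpow_add_one hu.ne', mul_right_comm]
      _ ≤ u ^ ((s.re + 1) - 1) * Real.exp (-(z.re / 2) * u) := by gcongr
  · refine .of_forall fun u y _ => (HasDerivAt.cexp ?_).const_mul _
    simpa using (hasDerivAt_id y).neg.mul_const (u : ℂ)

lemma eqOn_re_pos_of_eq_ofReal {E : Type*} [NormedAddCommGroup E] [NormedSpace ℂ E]
    [CompleteSpace E] {f g : ℂ → E} (hf : DifferentiableOn ℂ f {z | 0 < z.re})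
    (hg : DifferentiableOn ℂ g {z | 0 < z.re}) (hfg : ∀ x : ℝ, 0 < x → f x = g x) :
    EqOn f g {z | 0 < z.re} := by
  have hopen : IsOpen {z : ℂ | 0 < z.re} := isOpen_lt continuous_const Complex.continuous_re
  have htendsto : Filter.Tendsto Complex.ofReal (𝓝[≠] 1) (𝓝[≠] (1 : ℝ)) :=
    Complex.ofRealCLM.hasDerivAt.tendsto_nhdsNE (by simp)
  have hfreq : ∃ᶠ z in 𝓝[≠] ((1 : ℝ) : ℂ), f z = g z := by
    refine htendsto.frequently (Filter.Eventually.frequently ?_)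
    filter_upwards [mem_nhdsWithin_of_mem_nhds (Ioi_mem_nhds one_pos)] with x hx using hfg x hx
  exact (hf.analyticOnNhd hopen).eqOn_of_preconnected_of_frequently_eq (hg.analyticOnNhd hopen)
    (convex_halfSpace_re_gt 0).isPreconnected (by simp) hfreq

lemma integral_cpow_mul_cexp_neg_mul {s z : ℂ} (hs : 0 < s.re) (hz : 0 < z.re) :
    ∫ u in Ioi (0 : ℝ), (u : ℂ) ^ (s - 1) * Complex.exp (-z * u) =
      Complex.Gamma s * z ^ (-s) := by
  refine eqOn_re_pos_of_eq_ofReal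
    (g := fun z => Complex.Gamma s * z ^ (-s))
    (fun z hz => (differentiableAt_integral_cpow_mul_cexp_neg_mul hs hz).differentiableWithinAt)
    (fun z hz => ((differentiableAt_id.cpow_const (.inl hz)).const_mul _).differentiableWithinAt)
    (fun x hx => ?_) hz
  have harg : (x : ℂ).arg ≠ Real.pi := by
    simpa only [Complex.arg_ofReal_of_nonneg hx.le] using Real.pi_pos.ne
  simp only [neg_mul]
  rw [Complex.integral_cpow_mul_exp_neg_mul_Ioi hs hx, one_div, Complex.inv_cpow _ _ harg,
    Complex.cpow_neg, mul_comm]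

end GammaIntegral

section DominatingFunction

open Set

lemma inv_one_sub_exp_neg_le {x : ℝ} (hx : 0 < x) : (1 - Real.exp (-x))⁻¹ ≤ 1 + x⁻¹ := by
  have hexp : Real.exp (-x) ≤ (1 + x)⁻¹ := by
    rw [Real.exp_neg, add_comm]
    exact inv_anti₀ (by positivity) (Real.add_one_le_exp x)
  calc (1 - Real.exp (-x))⁻¹ ≤ (1 - (1 + x)⁻¹)⁻¹ :=
        inv_anti₀ (sub_pos.2 (inv_lt_one_of_one_lt₀ (by linarith))) (by gcongr)
    _ = 1 + x⁻¹ := by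
        have hsub : 1 - (1 + x)⁻¹ = x / (1 + x) := by
          field_simp
          ring
        rw [hsub, inv_div, add_div, div_self hx.ne', one_div, add_comm]

lemma inv_one_sub_exp_neg_mul_nonneg {α u : ℝ} (hα : 0 < α) (hu : 0 < u) :
    0 ≤ (1 - Real.exp (-α * u))⁻¹ := by
  rw [inv_nonneg, sub_nonneg, Real.exp_le_one_iff, neg_mul, neg_nonpos]
  positivity

lemma integrableOn_rpow_mul_exp_mul_prod_inv_one_sub_exp {ι : Type*} {α : ι → ℝ} {ω σ : ℝ}
    (t : Finset ι) (hα : ∀ j ∈ t, 0 < α j) (hω : 0 < ω) (hσ : t.card < σ) :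
    IntegrableOn (fun u : ℝ => u ^ (σ - 1) * Real.exp (-ω * u) *
      ∏ j ∈ t, (1 - Real.exp (-α j * u))⁻¹) (Ioi 0) := by
  induction t using Finset.cons_induction generalizing σ with
  | empty => simpa using integrableOn_rpow_mul_exp_neg_mul (by simpa using hσ) hω
  | cons i t hi ih =>
    have hαi : 0 < α i := hα i (Finset.mem_cons_self i t)
    have hαt : ∀ j ∈ t, 0 < α j := fun j hj => hα j (Finset.mem_cons_of_mem hj)
    rw [Finset.card_cons, Nat.cast_add_one] at hσ
    refine ((ih hαt (by linarith : (t.card : ℝ) < σ)).add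
      ((ih hαt (by linarith : (t.card : ℝ) < σ - 1)).const_mul (α i)⁻¹)).mono'
      (Measurable.aestronglyMeasurable (by fun_prop)) ?_
    filter_upwards [ae_restrict_mem measurableSet_Ioi] with u (hu : 0 < u)
    have hP : 0 ≤ ∏ j ∈ t, (1 - Real.exp (-α j * u))⁻¹ :=
      Finset.prod_nonneg fun j hj => inv_one_sub_exp_neg_mul_nonneg (hαt j hj) hu
    have hfactor : (1 - Real.exp (-α i * u))⁻¹ ≤ 1 + (α i * u)⁻¹ := by
      simpa only [neg_mul] using inv_one_sub_exp_neg_le (mul_pos hαi hu)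
    have hpow : u ^ (σ - 1 - 1) = u ^ (σ - 1) * u⁻¹ := by
      rw [Real.rpow_sub_one hu.ne', div_eq_mul_inv]
    have hfactor_nonneg := inv_one_sub_exp_neg_mul_nonneg hαi hu
    rw [Finset.prod_cons, Real.norm_of_nonneg (by positivity)]
    calc u ^ (σ - 1) * Real.exp (-ω * u) *
          ((1 - Real.exp (-α i * u))⁻¹ * ∏ j ∈ t, (1 - Real.exp (-α j * u))⁻¹)
        ≤ u ^ (σ - 1) * Real.exp (-ω * u) *
          ((1 + (α i * u)⁻¹) * ∏ j ∈ t, (1 - Real.exp (-α j * u))⁻¹) := by gcongr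
      _ = _ := by
        simp only [Pi.add_apply, hpow, mul_inv]
        ring

end DominatingFunction

section TermwiseIntegration

open Set

variable {ι : Type*} [Fintype ι] {s w : ℂ} {a ε : ι → ℂ}

lemma prod_mul_cexp_pow (ε a : ι → ℂ) (n : ι → ℕ) (u : ℂ) :
    ∏ j, (ε j * Complex.exp (-a j * u)) ^ n j =
      (∏ j, ε j ^ n j) * Complex.exp (-(∑ j, (n j : ℂ) * a j) * u) := by
  simp_rw [mul_pow, ← Complex.exp_nat_mul]
  rw [Finset.prod_mul_distrib, ← Complex.exp_sum, neg_mul, Finset.sum_mul,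
    ← Finset.sum_neg_distrib]
  congr! 3
  ring

lemma norm_mul_cexp_neg_mul_le {η : ℂ} (hη : ‖η‖ ≤ 1) (b : ℂ) (u : ℝ) :
    ‖η * Complex.exp (-b * u)‖ ≤ Real.exp (-b.re * u) := by
  simpa [Complex.norm_exp] using mul_le_of_le_one_left (Real.exp_pos (-(b.re * u))).le hη

lemma re_add_sum_natCast_mul_pos (hw : 0 < w.re) (ha : ∀ j, 0 < (a j).re) (n : ι → ℕ) :
    0 < (w + ∑ j, (n j : ℂ) * a j).re := by
  rw [Complex.add_re, Complex.re_sum]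
  refine add_pos_of_pos_of_nonneg hw (Finset.sum_nonneg fun j _ => ?_)
  simpa using mul_nonneg (Nat.cast_nonneg (n j)) (ha j).le

lemma integral_cpow_mul_cexp_mul_prod_pow (hs : 0 < s.re) (hw : 0 < w.re)
    (ha : ∀ j, 0 < (a j).re) (ε : ι → ℂ) (n : ι → ℕ) :
    ∫ u in Ioi (0 : ℝ), (u : ℂ) ^ (s - 1) * Complex.exp (-w * u) *
        ∏ j, (ε j * Complex.exp (-a j * u)) ^ n j =
      Complex.Gamma s * ((∏ j, ε j ^ n j) * (w + ∑ j, (n j : ℂ) * a j) ^ (-s)) := by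
  have hterm (u : ℝ) : (u : ℂ) ^ (s - 1) * Complex.exp (-w * u) *
      ∏ j, (ε j * Complex.exp (-a j * u)) ^ n j = (∏ j, ε j ^ n j) *
        ((u : ℂ) ^ (s - 1) * Complex.exp (-(w + ∑ j, (n j : ℂ) * a j) * u)) := by
    rw [prod_mul_cexp_pow, neg_add, add_mul, Complex.exp_add]
    ring
  simp_rw [hterm]
  rw [integral_const_mul, integral_cpow_mul_cexp_neg_mul hs (re_add_sum_natCast_mul_pos hw ha n)]
  ring

lemma hasSum_integral_cpow_mul_cexp_mul_prod_pow (hs : Fintype.card ι < s.re) (hw : 0 < w.re)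
    (ha : ∀ j, 0 < (a j).re) (hε : ∀ j, ‖ε j‖ ≤ 1) :
    HasSum (fun n : ι → ℕ => ∫ u in Ioi (0 : ℝ), (u : ℂ) ^ (s - 1) * Complex.exp (-w * u) *
        ∏ j, (ε j * Complex.exp (-a j * u)) ^ n j)
      (∫ u in Ioi (0 : ℝ), (u : ℂ) ^ (s - 1) * Complex.exp (-w * u) *
        ∏ j, (1 - ε j * Complex.exp (-a j * u))⁻¹) := by
  have hexp_lt {u : ℝ} (hu : 0 < u) (j : ι) : Real.exp (-(a j).re * u) < 1 := by
    rw [Real.exp_lt_one_iff, neg_mul, neg_neg_iff_pos]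
    exact mul_pos (ha j) hu
  have hbound {u : ℝ} (hu : 0 < u) : HasSum
      (fun n : ι → ℕ =>
        u ^ (s.re - 1) * Real.exp (-w.re * u) * ∏ j, Real.exp (-(a j).re * u) ^ n j)
      (u ^ (s.re - 1) * Real.exp (-w.re * u) * ∏ j, (1 - Real.exp (-(a j).re * u))⁻¹) :=
    (hasSum_prod_pow fun j =>
      (Real.norm_of_nonneg (Real.exp_pos _).le).trans_lt (hexp_lt hu j)).mul_left _
  refine hasSum_integral_of_dominated_convergence
    (F := fun (n : ι → ℕ) (u : ℝ) => (u : ℂ) ^ (s - 1) * Complex.exp (-w * u) *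
      ∏ j, (ε j * Complex.exp (-a j * u)) ^ n j)
    (fun n u => u ^ (s.re - 1) * Real.exp (-w.re * u) * ∏ j, Real.exp (-(a j).re * u) ^ n j)
    (fun n => Measurable.aestronglyMeasurable (by fun_prop)) (fun n => ?_) ?_ ?_ ?_
  · filter_upwards [ae_restrict_mem measurableSet_Ioi] with u (hu : 0 < u)
    rw [norm_mul, norm_cpow_mul_cexp_neg_mul s w hu, norm_prod]
    simp_rw [norm_pow]
    gcongr with j
    exact norm_mul_cexp_neg_mul_le (hε j) (a j) u
  · filter_upwards [ae_restrict_mem measurableSet_Ioi] with u hu using (hbound hu).summable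
  · refine (integrableOn_rpow_mul_exp_mul_prod_inv_one_sub_exp Finset.univ
      (fun j _ => ha j) hw hs).congr ?_
    filter_upwards [ae_restrict_mem measurableSet_Ioi] with u hu using (hbound hu).tsum_eq.symm
  · filter_upwards [ae_restrict_mem measurableSet_Ioi] with u hu
    exact (hasSum_prod_pow fun j =>
      (norm_mul_cexp_neg_mul_le (hε j) (a j) u).trans_lt (hexp_lt hu j)).mul_left _

lemma hasSum_prod_pow_mul_cpow_neg (hs : Fintype.card ι < s.re) (hw : 0 < w.re)
    (ha : ∀ j, 0 < (a j).re) (hε : ∀ j, ‖ε j‖ ≤ 1) :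
    HasSum (fun n : ι → ℕ => (∏ j, ε j ^ n j) * (w + ∑ j, (n j : ℂ) * a j) ^ (-s))
      ((1 / Complex.Gamma s) *
        ∫ u in Ioi (0 : ℝ), (u : ℂ) ^ (s - 1) * Complex.exp (-w * u) *
          ∏ j, (1 - ε j * Complex.exp (-a j * u))⁻¹) := by
  have hs_pos : 0 < s.re := (Nat.cast_nonneg _).trans_lt hs
  have hΓ : Complex.Gamma s ≠ 0 := Complex.Gamma_ne_zero_of_re_pos hs_pos
  refine ((hasSum_integral_cpow_mul_cexp_mul_prod_pow hs hw ha hε).mul_left _).congr_fun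
    fun n => ?_
  rw [integral_cpow_mul_cexp_mul_prod_pow hs_pos hw ha]
  field_simp

end TermwiseIntegration

theorem barnesZeta_integral_rep (N : ℕ) (hN : 1 ≤ N) (s w : ℂ) (a : Fin N → ℂ)
    (hs : (N : ℝ) < s.re) (hw : 0 < w.re) (ha : ∀ j, 0 < (a j).re) :
    (barnesZeta N s w a =
      (1 / Complex.Gamma s) *
        ∫ u in Set.Ioi (0 : ℝ), (u : ℂ) ^ (s - 1) * Complex.exp (-w * u) *
          ∏ j, (1 - Complex.exp (-a j * u))⁻¹) ∧
    (barnesZetaAlt N s w a =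
      (1 / Complex.Gamma s) *
        ∫ u in Set.Ioi (0 : ℝ), (u : ℂ) ^ (s - 1) * Complex.exp (-w * u) *
          ∏ j, (1 + Complex.exp (-a j * u))⁻¹) := by
  have hcard : (Fintype.card (Fin N) : ℝ) < s.re := by rwa [Fintype.card_fin]
  constructor
  · have hsum := hasSum_prod_pow_mul_cpow_neg (ε := fun _ => 1) hcard hw ha (by simp)
    simpa [barnesZeta] using hsum.tsum_eq
  · have hsum := hasSum_prod_pow_mul_cpow_neg (ε := fun _ => -1) hcard hw ha (by simp)
    simpa [barnesZetaAlt, Finset.prod_pow_eq_pow_sum] using hsum.tsum_eq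
end

section
/- The limit as N → ∞ of Σ_{(p,q) ∈ {0,…,N}², (p,q) ≠ (0,0)} (−1)^{p+q+1} arctan((p+q+1)/(p(p+1)+q(q+1))) exists and equals π/4. -/
open Real Filter

/-!
Since `(p + (q+1)i) * conj ((p+1) + qi) = (p(p+1) + q(q+1)) + (p+q+1)i`, the arctangent in the sum
is `θ(p, q+1) - θ(p+1, q)`, where `θ(m, n) = arg (m + ni)`. The coordinates of both lattice
points add up to `p+q+1`, so the sign `(-1)^(p+q+1)` can be absorbed into `θ` and the sum over the
square `{0, …, M-1}²` telescopes to its boundary. By the reflection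
`θ(m, n) + θ(n, m) = π/2` the boundary terms collapse to `-2 (-1)^M ∑_{k<M} (-1)^k θ(M, k)`.

On the side `(M, 0), …, (M, M)` the angle rises from `0` to `π/4` in decreasing steps, so summation
by parts gives `2 ∑_{k<M} (-1)^k θ(M, k) = -(-1)^M π/4` up to an error of at most the first step
`arctan (1/M)`.
-/

open scoped ComplexConjugate

section AlternatingSums

variable {R : Type*} [CommRing R]

lemma two_mul_alternating_sum (u : ℕ → R) (n : ℕ) :
    2 * ∑ k ∈ Finset.range n, (-1) ^ k * u k =
      u 0 - (-1) ^ n * u n - ∑ k ∈ Finset.range n, (-1) ^ k * (u (k + 1) - u k) := by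
  induction n with
  | zero => simp
  | succ n ih =>
    rw [Finset.sum_range_succ, Finset.sum_range_succ, mul_add, ih, pow_succ]
    ring

variable [LinearOrder R] [IsOrderedRing R]

lemma alternating_sum_mem_Icc_of_antitone {d : ℕ → R} (hd : Antitone d) (hd₀ : ∀ k, 0 ≤ d k)
    (n : ℕ) :
    ∑ k ∈ Finset.range n, (-1) ^ k * d k ∈ Set.Icc 0 (d 0) := by
  induction n generalizing d with
  | zero => simpa using hd₀ 0
  | succ n ih =>
    have htail := ih (hd.comp_monotone (fun _ _ => Nat.succ_le_succ)) fun k => hd₀ (k + 1)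
    have hsplit : ∑ k ∈ Finset.range (n + 1), (-1) ^ k * d k =
        d 0 - ∑ k ∈ Finset.range n, (-1) ^ k * d (k + 1) := by
      simp only [Finset.sum_range_succ', pow_succ, mul_neg_one, neg_mul, Finset.sum_neg_distrib,
        pow_zero, one_mul, neg_add_eq_sub]
    have hle : d 1 ≤ d 0 := hd zero_le_one
    rw [hsplit]
    exact ⟨sub_nonneg.mpr (htail.2.trans hle), sub_le_self _ htail.1⟩

lemma abs_two_mul_alternating_sum_sub_le {u : ℕ → R} (hmono : Monotone u)
    (hconcave : Antitone fun k => u (k + 1) - u k) (n : ℕ) :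
    |2 * ∑ k ∈ Finset.range n, (-1) ^ k * u k - (u 0 - (-1) ^ n * u n)| ≤ u 1 - u 0 := by
  obtain ⟨hnonneg, hle⟩ :=
    alternating_sum_mem_Icc_of_antitone hconcave (fun k => sub_nonneg.mpr (hmono k.le_succ)) n
  rwa [two_mul_alternating_sum, sub_sub_cancel_left, abs_neg, abs_of_nonneg hnonneg]

end AlternatingSums

lemma sum_square_telescope {G : Type*} [AddCommGroup G] (s : ℕ → ℕ → G) (M : ℕ) :
    ∑ p ∈ Finset.range M, ∑ q ∈ Finset.range M, (s p (q + 1) - s (p + 1) q) =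
      ∑ k ∈ Finset.range M, ((s k M - s M k) + (s 0 k - s k 0)) := by
  have hvertical : ∑ p ∈ Finset.range M, ∑ q ∈ Finset.range M, (s p (q + 1) - s p q) =
      ∑ k ∈ Finset.range M, (s k M - s k 0) :=
    Finset.sum_congr rfl fun p _ => Finset.sum_range_sub (s p) M
  have hhorizontal : ∑ p ∈ Finset.range M, ∑ q ∈ Finset.range M, (s (p + 1) q - s p q) =
      ∑ k ∈ Finset.range M, (s M k - s 0 k) := by
    rw [Finset.sum_comm]
    exact Finset.sum_congr rfl fun q _ => Finset.sum_range_sub (s · q) M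
  calc
    _ = ∑ p ∈ Finset.range M, ∑ q ∈ Finset.range M, (s p (q + 1) - s p q) -
        ∑ p ∈ Finset.range M, ∑ q ∈ Finset.range M, (s (p + 1) q - s p q) := by
      simp only [← Finset.sum_sub_distrib, sub_sub_sub_cancel_right]
    _ = _ := by
      rw [hvertical, hhorizontal, ← Finset.sum_sub_distrib]
      exact Finset.sum_congr rfl fun k _ => by abel

section Arg

open Complex

lemma arg_eq_arctan_of_re_pos {z : ℂ} (hz : 0 < z.re) : arg z = Real.arctan (z.im / z.re) := by
  obtain ⟨hlower, hupper⟩ := abs_lt.mp (abs_arg_lt_pi_div_two_iff.mpr (.inl hz))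
  rw [← tan_arg, Real.arctan_tan hlower hupper]

lemma arg_mul_conj {z w : ℂ} (hz : z ≠ 0) (hw : w ≠ 0) (h : arg z - arg w ∈ Set.Ioc (-π) π) :
    arg (z * conj w) = arg z - arg w := by
  rw [← arg_coe_angle_toReal_eq_arg, arg_mul_coe_angle hz ((map_ne_zero _).mpr hw),
    arg_conj_coe_angle, ← sub_eq_add_neg, ← Real.Angle.coe_sub]
  exact Real.Angle.toReal_coe_eq_self_iff_mem_Ioc.mpr h

lemma arg_sub_arg_eq_arctan {z w : ℂ} (h : arg z - arg w ∈ Set.Ioc (-π) π)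
    (hre : 0 < (z * conj w).re) :
    arg z - arg w = Real.arctan ((z * conj w).im / (z * conj w).re) := by
  have hz : z ≠ 0 := by rintro rfl; simp at hre
  have hw : w ≠ 0 := by rintro rfl; simp at hre
  rw [← arg_mul_conj hz hw h, arg_eq_arctan_of_re_pos hre]

end Arg

/-- The angle `θ(m, n) = arg (m + ni) ∈ [0, π/2]` at which the lattice point `(m, n)` is seen from
the origin, whose own angle is `0` by convention. The arctangents to be summed are differences of
such angles. -/
noncomputable def latticeAngle (m n : ℕ) : ℝ := Complex.arg (m + n * Complex.I)

namespace latticeAngle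

lemma mem_Icc (m n : ℕ) : latticeAngle m n ∈ Set.Icc 0 (π / 2) :=
  ⟨Complex.arg_nonneg_iff.mpr (by simp), Complex.arg_le_pi_div_two_iff.mpr (.inl (by simp))⟩

lemma sub_eq_arctan {a b c d : ℕ} (h : 0 < a * c + b * d) :
    latticeAngle a b - latticeAngle c d =
      arctan (((b : ℝ) * c - a * d) / (a * c + b * d)) := by
  set z : ℂ := a + b * Complex.I
  set w : ℂ := c + d * Complex.I
  have hre : (z * conj w).re = a * c + b * d := by simp [z, w]
  have him : (z * conj w).im = b * c - a * d := by simp [z, w, neg_add_eq_sub]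
  have hdiff : Complex.arg z - Complex.arg w ∈ Set.Ioc (-π) π := by
    have hz : Complex.arg z ∈ Set.Icc 0 (π / 2) := mem_Icc a b
    have hw : Complex.arg w ∈ Set.Icc 0 (π / 2) := mem_Icc c d
    constructor <;> linarith [pi_pos, hz.1, hz.2, hw.1, hw.2]
  rw [← hre, ← him]
  exact arg_sub_arg_eq_arctan hdiff (by rw [hre]; exact_mod_cast h)

lemma swap {m n : ℕ} (h : (m, n) ≠ (0, 0)) :
    latticeAngle n m = π / 2 - latticeAngle m n := by
  set z : ℂ := m + n * Complex.I
  have hz : z ≠ 0 := by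
    contrapose! h
    simpa [z] using Complex.ext_iff.mp h
  have hdiff : Complex.arg Complex.I - Complex.arg z ∈ Set.Ioc (-π) π := by
    have hmem : Complex.arg z ∈ Set.Icc 0 (π / 2) := mem_Icc m n
    rw [Complex.arg_I]
    constructor <;> linarith [pi_pos, hmem.1, hmem.2]
  calc
    latticeAngle n m = Complex.arg (Complex.I * conj z) := by
      rw [latticeAngle]
      congr 1
      apply Complex.ext <;> simp [z]
    _ = π / 2 - latticeAngle m n := by
      rw [arg_mul_conj Complex.I_ne_zero hz hdiff, Complex.arg_I, latticeAngle]

lemma zero_right (m : ℕ) : latticeAngle m 0 = 0 := by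
  simp [latticeAngle]

lemma zero_left {n : ℕ} (hn : n ≠ 0) : latticeAngle 0 n = π / 2 := by
  rw [swap (by simpa using hn), zero_right, sub_zero]

lemma diagonal {n : ℕ} (hn : n ≠ 0) : latticeAngle n n = π / 4 := by
  linarith [swap (m := n) (n := n) (by simpa using hn)]

lemma antidiagonal_step {p q : ℕ} (h : (p, q) ≠ (0, 0)) :
    latticeAngle p (q + 1) - latticeAngle (p + 1) q =
      arctan (((p : ℝ) + q + 1) / (p * (p + 1) + q * (q + 1))) := by
  have hpos : 0 < p * (p + 1) + (q + 1) * q := by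
    rcases Nat.eq_zero_or_pos p with rfl | hp
    · have : 0 < q := Nat.pos_of_ne_zero (by simpa using h)
      positivity
    · positivity
  rw [sub_eq_arctan hpos]
  congr 1
  push_cast
  ring

lemma vertical_step {m : ℕ} (hm : m ≠ 0) (n : ℕ) :
    latticeAngle m (n + 1) - latticeAngle m n = arctan ((m : ℝ) / (m ^ 2 + n * (n + 1))) := by
  rw [sub_eq_arctan (by positivity)]
  congr 1
  push_cast
  ring

lemma monotone_right {m : ℕ} (hm : m ≠ 0) : Monotone (latticeAngle m) :=
  monotone_nat_of_le_succ fun n => by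
    rw [← sub_nonneg, vertical_step hm]
    exact arctan_nonneg.mpr (by positivity)

lemma antitone_vertical_step {m : ℕ} (hm : m ≠ 0) :
    Antitone fun n => latticeAngle m (n + 1) - latticeAngle m n := by
  intro k n hkn
  simp only [vertical_step hm]
  apply arctan_mono
  gcongr

lemma tendsto_one_right : Tendsto (latticeAngle · 1) atTop (nhds 0) := by
  have harctan : Tendsto (fun m : ℕ => arctan (1 / (m : ℝ))) atTop (nhds 0) := by
    simpa only [Function.comp_def, arctan_zero] using
      (continuous_arctan.tendsto 0).comp (tendsto_one_div_atTop_nhds_zero_nat (𝕜 := ℝ))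
  refine harctan.congr' ?_
  filter_upwards [eventually_ne_atTop 0] with m hm
  calc
    arctan (1 / (m : ℝ)) = arctan ((m : ℝ) / (m ^ 2 + (0 : ℕ) * ((0 : ℕ) + 1))) := by
      congr 1
      rw [Nat.cast_zero, zero_mul, add_zero]
      field_simp
    _ = latticeAngle m 1 - latticeAngle m 0 := (vertical_step hm 0).symm
    _ = latticeAngle m 1 := by rw [zero_right, sub_zero]

lemma signed_outer_sides_sum (M : ℕ) :
    ∑ k ∈ Finset.range M, ((-1) ^ (k + M) * latticeAngle k M - (-1) ^ (M + k) * latticeAngle M k) =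
      (-1) ^ M * (π / 2 * ∑ k ∈ Finset.range M, (-1) ^ k -
        2 * ∑ k ∈ Finset.range M, (-1) ^ k * latticeAngle M k) := by
  simp only [Finset.mul_sum, ← Finset.sum_sub_distrib]
  refine Finset.sum_congr rfl fun k hk => ?_
  have hM : M ≠ 0 := Nat.ne_zero_of_lt (Finset.mem_range.mp hk)
  rw [swap (m := M) (n := k) (by simp [hM])]
  ring

lemma signed_axes_sum {M : ℕ} (hM : M ≠ 0) :
    ∑ k ∈ Finset.range M, ((-1) ^ k * latticeAngle 0 k - (-1) ^ k * latticeAngle k 0) =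
      π / 2 * ∑ k ∈ Finset.range M, (-1) ^ k - π / 2 := by
  obtain ⟨N, rfl⟩ := Nat.exists_eq_succ_of_ne_zero hM
  simp [Finset.sum_range_succ', zero_right, zero_left, Finset.mul_sum, mul_add, mul_comm]

lemma sum_square_erase {M : ℕ} (hM : M ≠ 0) :
    ∑ pq ∈ (Finset.range M ×ˢ Finset.range M).erase (0, 0),
        (-1) ^ (pq.1 + pq.2 + 1) *
          (latticeAngle pq.1 (pq.2 + 1) - latticeAngle (pq.1 + 1) pq.2) =
      -2 * (-1) ^ M * ∑ k ∈ Finset.range M, (-1) ^ k * latticeAngle M k := by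
  have hcorner : latticeAngle 0 1 - latticeAngle 1 0 = π / 2 := by
    rw [zero_left one_ne_zero, zero_right, sub_zero]
  have htelescope := sum_square_telescope (fun m n => (-1 : ℝ) ^ (m + n) * latticeAngle m n) M
  simp only [Finset.sum_add_distrib, zero_add, add_zero] at htelescope
  rw [signed_outer_sides_sum, signed_axes_sum hM] at htelescope
  have hsign (p q : ℕ) :
      (-1) ^ (p + q + 1) * (latticeAngle p (q + 1) - latticeAngle (p + 1) q) =
        (-1) ^ (p + (q + 1)) * latticeAngle p (q + 1) -
          (-1) ^ (p + 1 + q) * latticeAngle (p + 1) q := by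
    ring
  have hparity : (1 + (-1) ^ M) * ∑ k ∈ Finset.range M, (-1 : ℝ) ^ k = 0 := by
    rw [neg_one_geom_sum]
    split_ifs with heven
    · simp
    · simp [(Nat.not_even_iff_odd.mp heven).neg_one_pow]
  rw [Finset.sum_erase_eq_sub (by simpa [Nat.pos_iff_ne_zero] using hM), Finset.sum_product]
  simp only [hsign, htelescope, zero_add, add_zero, pow_one]
  linear_combination hcorner + π / 2 * hparity

lemma tendsto_alternating_sum :
    Tendsto (fun M : ℕ => -2 * (-1) ^ M * ∑ k ∈ Finset.range M, (-1) ^ k * latticeAngle M k)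
      atTop (nhds (π / 4)) := by
  rw [tendsto_iff_norm_sub_tendsto_zero]
  refine squeeze_zero' (.of_forall fun _ => norm_nonneg _) ?_ tendsto_one_right
  filter_upwards [eventually_ne_atTop 0] with M hM
  have hbound := abs_two_mul_alternating_sum_sub_le (monotone_right hM)
    (antitone_vertical_step hM) M
  rw [diagonal hM, zero_right, zero_sub, sub_neg_eq_add, sub_zero] at hbound
  have hfactor : -2 * (-1) ^ M * ∑ k ∈ Finset.range M, (-1) ^ k * latticeAngle M k - π / 4 =
      -(-1) ^ M * (2 * ∑ k ∈ Finset.range M, (-1) ^ k * latticeAngle M k + (-1) ^ M * (π / 4)) := by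
    have hsq : (-1 : ℝ) ^ M * (-1) ^ M = 1 := by rw [← mul_pow, neg_one_mul, neg_neg, one_pow]
    linear_combination (π / 4) * hsq
  rw [hfactor, norm_mul, norm_neg, norm_pow, norm_neg, norm_one, one_pow, one_mul]
  exact hbound

end latticeAngle

theorem arctan_double_sum_eq_pi_div_four :
    Tendsto (fun N : ℕ =>
      ∑ pq ∈ (Finset.range (N + 1) ×ˢ Finset.range (N + 1)).erase (0, 0),
        (-1 : ℝ) ^ (pq.1 + pq.2 + 1) *
          Real.arctan (((pq.1 : ℝ) + (pq.2 : ℝ) + 1) /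
            ((pq.1 : ℝ) * ((pq.1 : ℝ) + 1) + (pq.2 : ℝ) * ((pq.2 : ℝ) + 1))))
      atTop (nhds (π / 4)) := by
  refine (latticeAngle.tendsto_alternating_sum.comp (tendsto_add_atTop_nat 1)).congr fun N => ?_
  rw [Function.comp_apply, ← latticeAngle.sum_square_erase N.succ_ne_zero]
  refine Finset.sum_congr rfl fun pq hpq => ?_
  rw [latticeAngle.antidiagonal_step (Finset.ne_of_mem_erase hpq)]
end

section
/- For every k ∈ (0,1), ∫₀^∞ dx/(cos(K√x) + cosh(K'√x)) + ∫₀^∞ dx/(cosh(K√x) + cos(K'√x)) = 2; equivalently, Kuznetsov's moment integral I_0^+ equals 1. -/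
/-!
Write `a = K(k)` and `b = K(k')`, and let `℘` belong to the rectangular lattice with half-periods
`a` and `ib`, with `e₁ = ℘(a)`, `e₂ = ℘(a + ib)` and `e₃ = ℘(ib)`.

After `x = t²` each integrand is a multiple of `t / (cosh αt · cosh βt)`. For the denominator
`cosh at + cos bt` one has `α = u/2` and `β = ū/2` with `u = a + ib`; for the other one, these are
multiplied by `-i` and `i`. Expanding in exponentials and integrating termwise gives the sum of
`±1 / (Mα + Nβ)²` over positive odd `M`, `N`, where consecutive odd indices are paired to make the
sum converge absolutely. The two integrals together fill the four quadrants, so they add up to a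
combination of values of the `℘`-function of the lattice with periods `2u`, `2ū`. The original
lattice is the union of two cosets of this one, which identifies the combination as `e₁ - e₃`.

It remains to see that `e₁ - e₃ = 1`. Let `l² = (e₂ - e₃) / (e₁ - e₃)`. Liouville's theorem gives
the factorization of `℘'²`, and then the substitution `sin² φ = (e₁ - e₃) / (℘(x) - e₃)` gives
`K(l) = √(e₁ - e₃) K(k)`. A quarter turn of the lattice gives `K(l') = √(e₁ - e₃) K(k')`. As `K(k)`
increases with `k` while `K(k')` decreases, the common factor must be `1`.
-/

open MeasureTheory Real

/-- The complete elliptic integral of the first kind `K(k)`. -/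
noncomputable def ellipticK (k : ℝ) : ℝ :=
  ∫ θ in (0 : ℝ)..(π / 2), (1 - k ^ 2 * Real.sin θ ^ 2) ^ (-(1 / 2) : ℝ)

/-- Kuznetsov's moment integral `I_n^+`, realizing
`(1/2)∫_ℝ x^n dx/(cos(√x K) + cosh(√x K'))` with `√x = i√(−x)` for `x < 0`. -/
noncomputable def Iplus (k : ℝ) (n : ℕ) : ℝ :=
  (1 / 2) * (∫ x in Set.Ioi (0 : ℝ), x ^ n /
      (Real.cos (ellipticK k * Real.sqrt x) +
        Real.cosh (ellipticK (Real.sqrt (1 - k ^ 2)) * Real.sqrt x)))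
  + ((-1 : ℝ) ^ n / 2) * (∫ x in Set.Ioi (0 : ℝ), x ^ n /
      (Real.cosh (ellipticK k * Real.sqrt x) +
        Real.cos (ellipticK (Real.sqrt (1 - k ^ 2)) * Real.sqrt x)))

/-- Kuznetsov's moment integral `I_n^−`, realizing
`∫_ℝ x^{n+1} dx/(cos(√x K) − cosh(√x K'))` with `√x = i√(−x)` for `x < 0`. -/
noncomputable def Iminus (k : ℝ) (n : ℕ) : ℝ :=
  (∫ x in Set.Ioi (0 : ℝ), x ^ (n + 1) /
      (Real.cos (ellipticK k * Real.sqrt x) -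
        Real.cosh (ellipticK (Real.sqrt (1 - k ^ 2)) * Real.sqrt x)))
  + (-1 : ℝ) ^ (n + 1) * (∫ x in Set.Ioi (0 : ℝ), x ^ (n + 1) /
      (Real.cosh (ellipticK k * Real.sqrt x) -
        Real.cos (ellipticK (Real.sqrt (1 - k ^ 2)) * Real.sqrt x)))

open Filter Set Topology
open scoped PeriodPair ComplexConjugate

lemma hasSum_add_of_isCompl_range {ι κ κ' E : Type*} [AddCommMonoid E] [TopologicalSpace E]
    [ContinuousAdd E] {f : ι → E} {i : κ → ι} {j : κ' → ι} {s t : E} (hi : i.Injective)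
    (hj : j.Injective) (hij : IsCompl (range i) (range j)) (hs : HasSum (f ∘ i) s)
    (ht : HasSum (f ∘ j) t) : HasSum f (s + t) :=
  (hi.hasSum_range_iff.mpr hs).add_isCompl hij (hj.hasSum_range_iff.mpr ht)

lemma hasSum_int_prod_of_nat_prod {κ E : Type*} [AddCommMonoid E] [TopologicalSpace E]
    [ContinuousAdd E] {f : ℤ × κ → E} {s t : E} (hs : HasSum (fun p : ℕ × κ => f (p.1, p.2)) s)
    (ht : HasSum (fun p : ℕ × κ => f (-(p.1 + 1), p.2)) t) : HasSum f (s + t) := by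
  rw [← ((Equiv.intEquivNatSumNat.prodCongr (.refl κ)).trans
    (.sumProdDistrib ℕ ℕ κ)).symm.hasSum_iff]
  exact hs.sum (ht.congr_fun fun p => congrArg (f ⟨·, p.2⟩) (Int.negSucc_eq p.1))

lemma hasSum_int_prod_int_of_quadrants {E : Type*} [AddCommMonoid E] [TopologicalSpace E]
    [ContinuousAdd E] {f : ℤ × ℤ → E} {s₁ s₂ s₃ s₄ : E}
    (h₁ : HasSum (fun p : ℕ × ℕ => f (p.1, p.2)) s₁)
    (h₂ : HasSum (fun p : ℕ × ℕ => f (p.1, -(p.2 + 1))) s₂)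
    (h₃ : HasSum (fun p : ℕ × ℕ => f (-(p.1 + 1), p.2)) s₃)
    (h₄ : HasSum (fun p : ℕ × ℕ => f (-(p.1 + 1), -(p.2 + 1))) s₄) :
    HasSum f (s₁ + s₂ + (s₃ + s₄)) := by
  have swap {g : ℕ × ℤ → E} {s t : E} (hs : HasSum (fun p : ℕ × ℕ => g (p.1, p.2)) s)
      (ht : HasSum (fun p : ℕ × ℕ => g (p.1, -(p.2 + 1))) t) : HasSum g (s + t) :=
    (Equiv.prodComm ℤ ℕ).hasSum_iff.mp (hasSum_int_prod_of_nat_prod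
      ((Equiv.prodComm ℕ ℕ).hasSum_iff.mpr hs) ((Equiv.prodComm ℕ ℕ).hasSum_iff.mpr ht))
  exact hasSum_int_prod_of_nat_prod (swap h₁ h₂) (swap h₃ h₄)

/-! ### Elliptic functions -/

lemma exists_eventuallyEq_const_of_meromorphicOrderAt_nonneg (Λ : Submodule ℤ ℂ)
    [DiscreteTopology Λ] [IsZLattice ℝ Λ] {f : ℂ → ℂ} (hf : Meromorphic f)
    (hper : ∀ l ∈ Λ, Function.Periodic f l) (hord : ∀ z, 0 ≤ meromorphicOrderAt f z) :
    ∃ c, ∀ z, f =ᶠ[𝓝[≠] z] fun _ => c := by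
  have hf' : MeromorphicOn f univ := hf.meromorphicOn
  set g := toMeromorphicNFOn f univ
  have hgf : ∀ z, g =ᶠ[𝓝[≠] z] f := fun z =>
    hf'.toMeromorphicNFOn_eq_self_on_nhdsNE (mem_univ z)
  have hg : Differentiable ℂ g := fun z => by
    refine AnalyticAt.differentiableAt ?_
    have hNF : MeromorphicNFAt g z := meromorphicNFOn_toMeromorphicNFOn f univ (mem_univ z)
    rw [← hNF.meromorphicOrderAt_nonneg_iff_analyticAt,
      meromorphicOrderAt_toMeromorphicNFOn hf' (mem_univ z)]
    exact hord z
  have hg_per : ∀ z l, l ∈ Λ → g (z + l) = g z := fun z l hl => by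
    have hnear : (fun w => g (w + l)) =ᶠ[𝓝[≠] z] g := by
      have htrans : Tendsto (· + l) (𝓝[≠] z) (𝓝[≠] (z + l)) := map_add_right_nhdsNE.le
      filter_upwards [htrans.eventually (hgf (z + l)), hgf z] with w h₁ h₂
      rw [h₁, hper l hl w, h₂]
    have hcont : Continuous fun w => g (w + l) := hg.continuous.comp (continuous_add_const l)
    exact ((hcont.continuousAt.eventuallyEq_nhds_iff_eventuallyEq_nhdsNE
      hg.continuous.continuousAt).mp hnear).eq_of_nhds
  have hbdd := (IsZLattice.isCompact_range_of_periodic Λ g hg.continuous hg_per).isBounded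
  exact ⟨g 0, fun z => (hgf z).symm.trans
    (Eventually.of_forall fun w => hg.apply_eq_apply_of_bounded hbdd w 0)⟩

section Weierstrass

variable (L : PeriodPair)

lemma weierstrassP_add_of_mem (z : ℂ) {l : ℂ} (hl : l ∈ L.lattice) : ℘[L] (z + l) = ℘[L] z :=
  L.weierstrassP_add_coe z ⟨l, hl⟩

lemma derivWeierstrassP_eq_zero_of_two_mul_mem {ω : ℂ} (h2ω : 2 * ω ∈ L.lattice) :
    ℘'[L] ω = 0 := by
  have h := L.derivWeierstrassP_add_coe (-ω) ⟨_, h2ω⟩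
  rw [show -ω + 2 * ω = ω by ring, L.derivWeierstrassP_neg] at h
  exact CharZero.eq_neg_self_iff.mp h

lemma meromorphicOrderAt_weierstrassP_sub_const {l : ℂ} (hl : l ∈ L.lattice) (c : ℂ) :
    meromorphicOrderAt (fun z => ℘[L] z - c) l = -2 := by
  classical
  have hlt : meromorphicOrderAt ℘[L] l < meromorphicOrderAt (fun _ : ℂ => -c) l := by
    rw [L.order_weierstrassP l hl, meromorphicOrderAt_const]
    split_ifs <;> decide
  have h := meromorphicOrderAt_add_eq_left_of_lt (MeromorphicAt.const (-c) l) hlt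
  rw [L.order_weierstrassP l hl] at h
  simpa only [Pi.add_def, ← sub_eq_add_neg] using h

lemma meromorphicOrderAt_weierstrassP_sub_const_nonneg {z : ℂ} (hz : z ∉ L.lattice) (c : ℂ) :
    0 ≤ meromorphicOrderAt (fun w => ℘[L] w - c) z :=
  ((L.analyticOnNhd_weierstrassP z hz).sub analyticAt_const).meromorphicOrderAt_nonneg

lemma two_le_meromorphicOrderAt_weierstrassP_sub {ω z : ℂ} (hω : ω ∉ L.lattice)
    (h2ω : 2 * ω ∈ L.lattice) (hz : z - ω ∈ L.lattice) :
    2 ≤ meromorphicOrderAt (fun w => ℘[L] w - ℘[L] ω) z := by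
  have hzL : z ∉ L.lattice := fun h => hω (by simpa using sub_mem h hz)
  have h2z : 2 * z ∈ L.lattice := by
    have h := add_mem (add_mem hz hz) h2ω
    rwa [show z - ω + (z - ω) + 2 * ω = 2 * z by ring] at h
  have h℘z : ℘[L] z = ℘[L] ω := by
    simpa only [add_sub_cancel] using weierstrassP_add_of_mem L ω hz
  have han : AnalyticAt ℂ (fun w => ℘[L] w - ℘[L] ω) z :=
    (L.analyticOnNhd_weierstrassP z hzL).sub analyticAt_const
  have h2 : (2 : ℕ) ≤ analyticOrderAt (fun w => ℘[L] w - ℘[L] ω) z := by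
    refine (natCast_le_analyticOrderAt_iff_iteratedDeriv_eq_zero han).mpr fun i hi => ?_
    interval_cases i
    · rw [iteratedDeriv_zero, h℘z, sub_self]
    · rw [iteratedDeriv_one, deriv_sub_const, L.deriv_weierstrassP,
        derivWeierstrassP_eq_zero_of_two_mul_mem L h2z]
  rw [han.meromorphicOrderAt_eq]
  exact ENat.monotone_map_iff.mpr Nat.mono_cast h2

lemma meromorphicOrderAt_weierstrassP_sub_const_ne_top (c z : ℂ) :
    meromorphicOrderAt (fun w => ℘[L] w - c) z ≠ ⊤ := by
  have hmer : Meromorphic fun w => ℘[L] w - c := by fun_prop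
  refine hmer.meromorphicOn.meromorphicOrderAt_ne_top_of_isPreconnected isPreconnected_univ
    (mem_univ 0) (mem_univ z) ?_
  rw [meromorphicOrderAt_weierstrassP_sub_const L (zero_mem _)]
  decide

lemma meromorphic_weierstrassP_sub_mul (ω e : ℂ) :
    Meromorphic fun z => (℘[L] z - e) * (℘[L] (z + ω) - e) :=
  (L.meromorphic_weierstrassP.sub (.const e)).mul
    ((Meromorphic.meromorphic_comp_add_const_iff_meromorphic.mpr
      L.meromorphic_weierstrassP).sub (.const e))

lemma meromorphicOrderAt_weierstrassP_sub_mul (ω e z : ℂ) :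
    meromorphicOrderAt (fun w => (℘[L] w - e) * (℘[L] (w + ω) - e)) z =
      meromorphicOrderAt (fun w => ℘[L] w - e) z +
        meromorphicOrderAt (fun w => ℘[L] w - e) (z + ω) := by
  have hmer : Meromorphic fun w => ℘[L] w - e := by fun_prop
  rw [← meromorphicOrderAt_fun_comp_add_const_eq_meromorphicOrderAt]
  exact fun_meromorphicOrderAt_mul (hmer z)
    (meromorphicAt_fun_comp_add_const_iff_meromorphicAt.mpr (hmer (z + ω)))

lemma meromorphicOrderAt_weierstrassP_sub_mul_nonneg {ω : ℂ} (hω : ω ∉ L.lattice)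
    (h2ω : 2 * ω ∈ L.lattice) (z : ℂ) :
    0 ≤ meromorphicOrderAt (fun w => (℘[L] w - ℘[L] ω) * (℘[L] (w + ω) - ℘[L] ω)) z := by
  have hcancel : (-2 : WithTop ℤ) + 2 = 0 := by decide
  rw [meromorphicOrderAt_weierstrassP_sub_mul]
  by_cases hz : z ∈ L.lattice
  · have h := two_le_meromorphicOrderAt_weierstrassP_sub L hω h2ω (z := z + ω) (by simpa)
    rw [meromorphicOrderAt_weierstrassP_sub_const L hz, ← hcancel]
    exact add_le_add_right h _
  by_cases hzω : z + ω ∈ L.lattice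
  · have h := two_le_meromorphicOrderAt_weierstrassP_sub L hω h2ω (z := z)
      (by simpa [two_mul] using sub_mem hzω h2ω)
    rw [meromorphicOrderAt_weierstrassP_sub_const L hzω, add_comm, ← hcancel]
    exact add_le_add_right h _
  · exact add_nonneg (meromorphicOrderAt_weierstrassP_sub_const_nonneg L hz _)
      (meromorphicOrderAt_weierstrassP_sub_const_nonneg L hzω _)

lemma sub_mem_lattice_of_weierstrassP_eq {ω z : ℂ} (hω : ω ∉ L.lattice) (h2ω : 2 * ω ∈ L.lattice)
    (hz : z ∉ L.lattice) (hzω : ℘[L] z = ℘[L] ω) : z - ω ∈ L.lattice := by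
  -- `F` has no poles, so it is constant; a zero outside `z ≡ -ω` would make it vanish identically.
  set F : ℂ → ℂ := fun w => (℘[L] w - ℘[L] ω) * (℘[L] (w + ω) - ℘[L] ω) with hF
  obtain ⟨c, hc⟩ := exists_eventuallyEq_const_of_meromorphicOrderAt_nonneg L.lattice
    (meromorphic_weierstrassP_sub_mul L ω (℘[L] ω))
    (fun l hl w => by
      rw [add_right_comm, weierstrassP_add_of_mem L w hl, weierstrassP_add_of_mem L (w + ω) hl])
    (meromorphicOrderAt_weierstrassP_sub_mul_nonneg L hω h2ω)
  by_contra hne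
  have hzω' : z + ω ∉ L.lattice := fun h => hne (by simpa [two_mul] using sub_mem h h2ω)
  have hFz : ContinuousAt F z := by
    have h₁ := (L.analyticOnNhd_weierstrassP z hz).continuousAt
    have h₂ : ContinuousAt (fun w => ℘[L] (w + ω)) z :=
      (L.analyticOnNhd_weierstrassP (z + ω) hzω').continuousAt.comp (f := (· + ω)) (by fun_prop)
    exact (h₁.sub_const _).mul (h₂.sub_const _)
  have hc0 : c = 0 := by
    have h := (hFz.eventuallyEq_nhds_iff_eventuallyEq_nhdsNE continuousAt_const).mp (hc z)
    rw [← h.eq_of_nhds, hF]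
    simp only [hzω, sub_self, zero_mul]
  have htop : meromorphicOrderAt F 0 = ⊤ := meromorphicOrderAt_eq_top_iff.mpr (hc0 ▸ hc 0)
  rw [meromorphicOrderAt_weierstrassP_sub_mul, WithTop.add_eq_top] at htop
  exact htop.elim (meromorphicOrderAt_weierstrassP_sub_const_ne_top L _ _)
    (meromorphicOrderAt_weierstrassP_sub_const_ne_top L _ _)

lemma derivWeierstrassP_sq_eq_mul {ω₁ ω₂ ω₃ : ℂ} (h₁ : ω₁ ∉ L.lattice) (h₂ : ω₂ ∉ L.lattice)
    (h₃ : ω₃ ∉ L.lattice) (d₁ : 2 * ω₁ ∈ L.lattice) (d₂ : 2 * ω₂ ∈ L.lattice)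
    (d₃ : 2 * ω₃ ∈ L.lattice) (h₁₂ : ω₁ - ω₂ ∉ L.lattice) (h₁₃ : ω₁ - ω₃ ∉ L.lattice)
    (h₂₃ : ω₂ - ω₃ ∉ L.lattice) {z : ℂ} (hz : z ∉ L.lattice) :
    ℘'[L] z ^ 2 = 4 * (℘[L] z - ℘[L] ω₁) * (℘[L] z - ℘[L] ω₂) * (℘[L] z - ℘[L] ω₃) := by
  have hcubic₁ := L.derivWeierstrassP_sq ω₁ h₁
  have hcubic₂ := L.derivWeierstrassP_sq ω₂ h₂
  have hcubic₃ := L.derivWeierstrassP_sq ω₃ h₃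
  rw [derivWeierstrassP_eq_zero_of_two_mul_mem L d₁] at hcubic₁
  rw [derivWeierstrassP_eq_zero_of_two_mul_mem L d₂] at hcubic₂
  rw [derivWeierstrassP_eq_zero_of_two_mul_mem L d₃] at hcubic₃
  have hne₁₂ : ℘[L] ω₁ - ℘[L] ω₂ ≠ 0 :=
    sub_ne_zero.mpr (mt (sub_mem_lattice_of_weierstrassP_eq L h₂ d₂ h₁) h₁₂)
  have hne₁₃ : ℘[L] ω₁ - ℘[L] ω₃ ≠ 0 :=
    sub_ne_zero.mpr (mt (sub_mem_lattice_of_weierstrassP_eq L h₃ d₃ h₁) h₁₃)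
  have hne₂₃ : ℘[L] ω₂ - ℘[L] ω₃ ≠ 0 :=
    sub_ne_zero.mpr (mt (sub_mem_lattice_of_weierstrassP_eq L h₃ d₃ h₂) h₂₃)
  rw [L.derivWeierstrassP_sq z hz]
  generalize ℘[L] ω₁ = e₁ at *
  generalize ℘[L] ω₂ = e₂ at *
  generalize ℘[L] ω₃ = e₃ at *
  have hdiff₁₂ : 4 * (e₁ ^ 2 + e₁ * e₂ + e₂ ^ 2) - L.g₂ = 0 :=
    mul_left_cancel₀ hne₁₂ (by linear_combination hcubic₂ - hcubic₁)
  have hdiff₁₃ : 4 * (e₁ ^ 2 + e₁ * e₃ + e₃ ^ 2) - L.g₂ = 0 :=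
    mul_left_cancel₀ hne₁₃ (by linear_combination hcubic₃ - hcubic₁)
  have hsum : e₁ + e₂ + e₃ = 0 :=
    mul_left_cancel₀ hne₂₃ (by linear_combination (hdiff₁₂ - hdiff₁₃) / 4)
  have hg₂ : L.g₂ = 4 * (e₁ ^ 2 + e₁ * e₂ + e₂ ^ 2) := by linear_combination -hdiff₁₂
  have hg₃ : L.g₃ = 4 * e₁ ^ 3 - L.g₂ * e₁ := by linear_combination hcubic₁
  have he₃ : e₃ = -e₁ - e₂ := by linear_combination hsum
  rw [hg₃, hg₂, he₃]
  ring

lemma tendsto_sq_mul_weierstrassP : Tendsto (fun z => z ^ 2 * ℘[L] z) (𝓝[≠] 0) (𝓝 1) := by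
  have hcont : ContinuousAt (fun z => z ^ 2 * L.weierstrassPExcept 0 z + 1) 0 :=
    ((continuousAt_id.pow 2).mul (L.analyticAt_weierstrassPExcept 0).continuousAt).add_const 1
  have hlim : Tendsto (fun z => z ^ 2 * L.weierstrassPExcept 0 z + 1) (𝓝[≠] 0) (𝓝 1) := by
    simpa using hcont.tendsto.mono_left nhdsWithin_le_nhds
  refine hlim.congr' ?_
  filter_upwards [self_mem_nhdsWithin] with z (hz : z ≠ 0)
  simpa [hz] using (L.ite_eq_one_sub_sq_mul_weierstrassP 0 (zero_mem _) z).symm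

lemma hasSum_int_prod_weierstrassP (z : ℂ) :
    HasSum (fun p : ℤ × ℤ => 1 / (z - (p.1 * L.ω₁ + p.2 * L.ω₂)) ^ 2
      - 1 / (p.1 * L.ω₁ + p.2 * L.ω₂) ^ 2) (℘[L] z) := by
  refine (L.latticeEquivProd.symm.toEquiv.hasSum_iff.mpr (L.hasSum_weierstrassP z)).congr_fun
    fun p => ?_
  simp [L.latticeEquiv_symm_apply]

variable {L}

lemma weierstrassP_eq_sq_mul {M : PeriodPair} {c : ℂ} (hc : c ≠ 0)
    (h : ∀ z, z ∈ M.lattice ↔ c * z ∈ L.lattice) (z : ℂ) : ℘[M] z = c ^ 2 * ℘[L] (c * z) := by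
  let e : M.lattice ≃ L.lattice := (Equiv.mulLeft₀ c hc).subtypeEquiv h
  simp only [PeriodPair.weierstrassP]
  rw [← e.tsum_eq, ← tsum_mul_left]
  refine tsum_congr fun l => ?_
  have he : (e l : ℂ) = c * l := rfl
  rw [he, ← mul_sub, mul_pow, mul_pow, mul_sub, mul_one_div, mul_one_div,
    ← div_div, ← div_div, div_self (pow_ne_zero 2 hc)]

lemma weierstrassP_conj (h : ∀ z ∈ L.lattice, conj z ∈ L.lattice) (z : ℂ) :
    ℘[L] (conj z) = conj (℘[L] z) := by
  let e : L.lattice ≃ L.lattice := (Complex.conjAe.toEquiv).subtypeEquiv fun w =>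
    ⟨h w, fun hw => by simpa using h _ hw⟩
  simp only [PeriodPair.weierstrassP]
  rw [← e.tsum_eq, Complex.conj_tsum]
  refine tsum_congr fun l => ?_
  have he : (e l : ℂ) = conj (l : ℂ) := rfl
  simp [he]

lemma derivWeierstrassP_conj (h : ∀ z ∈ L.lattice, conj z ∈ L.lattice) (z : ℂ) :
    ℘'[L] (conj z) = conj (℘'[L] z) := by
  have hfun : conj ∘ ℘[L] ∘ conj = ℘[L] := by
    ext w; simp [weierstrassP_conj h]
  have hderiv := congrFun (deriv_conj_conj (f := ℘[L])) (conj z)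
  simpa [hfun, L.deriv_weierstrassP] using hderiv

lemma weierstrassP_eq_of_index_two {M : PeriodPair} {ω : ℂ} (hω : ω ∉ M.lattice)
    (h : ∀ z, z ∈ L.lattice ↔ z ∈ M.lattice ∨ z - ω ∈ M.lattice) (z : ℂ) :
    ℘[L] z = ℘[M] z + (℘[M] (z - ω) - ℘[M] ω) := by
  let i (l : M.lattice) : L.lattice := ⟨l, (h l).mpr (.inl l.2)⟩
  let j (l : M.lattice) : L.lattice := ⟨ω + l, (h _).mpr (.inr (by simp))⟩
  have hi : Function.Injective i := fun l m hlm => Subtype.ext (Subtype.mk.inj hlm)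
  have hj : Function.Injective j := fun l m hlm =>
    Subtype.ext (add_left_cancel (Subtype.mk.inj hlm))
  have hij : IsCompl (range i) (range j) := by
    refine ⟨disjoint_left.mpr ?_, codisjoint_iff_le_sup.mpr fun l _ => ?_⟩
    · rintro _ ⟨l, rfl⟩ ⟨m, hm⟩
      have : ω + m = l := congrArg Subtype.val hm
      exact hω (by simpa [← this] using sub_mem l.2 m.2)
    · rcases (h l).mp l.2 with hl | hl
      · exact .inl ⟨⟨l, hl⟩, rfl⟩
      · exact .inr ⟨⟨l - ω, hl⟩, Subtype.ext (add_sub_cancel ω (l : ℂ))⟩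
  have hM := (M.hasSum_weierstrassP (z - ω)).sub (M.hasSum_weierstrassP (-ω))
  rw [M.weierstrassP_neg] at hM
  refine (L.hasSum_weierstrassP z).unique (hasSum_add_of_isCompl_range hi hj hij
    (M.hasSum_weierstrassP z) (hM.congr_fun fun l => ?_))
  simp only [Function.comp_apply, j]
  rw [sub_sub_sub_cancel_right, sub_sub, ← neg_sq (-ω - l), neg_sub, sub_neg_eq_add,
    add_comm (l : ℂ) ω]

end Weierstrass

/-! ### Complete elliptic integrals -/

/-- The incomplete elliptic integral of the first kind `F(φ, k)`, with the modulus as first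
argument; `ellipticK k` is `ellipticF k (π / 2)`. -/
noncomputable def ellipticF (k φ : ℝ) : ℝ :=
  ∫ θ in (0 : ℝ)..φ, (1 - k ^ 2 * sin θ ^ 2) ^ (-(1 / 2) : ℝ)

section EllipticIntegral

variable {k : ℝ}

lemma one_sub_sq_mul_sin_sq_pos (hk : k ^ 2 < 1) (θ : ℝ) : 0 < 1 - k ^ 2 * sin θ ^ 2 := by
  nlinarith [sin_sq_le_one θ, sq_nonneg k]

lemma continuous_one_sub_sq_mul_sin_sq_rpow (hk : k ^ 2 < 1) (s : ℝ) :
    Continuous fun θ => (1 - k ^ 2 * sin θ ^ 2) ^ s :=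
  Continuous.rpow_const (by fun_prop) fun θ => .inl (one_sub_sq_mul_sin_sq_pos hk θ).ne'

lemma hasDerivAt_ellipticF (hk : k ^ 2 < 1) (φ : ℝ) :
    HasDerivAt (ellipticF k) ((1 - k ^ 2 * sin φ ^ 2) ^ (-(1 / 2) : ℝ)) φ :=
  ((continuous_one_sub_sq_mul_sin_sq_rpow hk _).integral_hasStrictDerivAt 0 φ).hasDerivAt

lemma continuous_ellipticF (hk : k ^ 2 < 1) : Continuous (ellipticF k) :=
  continuous_iff_continuousAt.mpr fun φ => (hasDerivAt_ellipticF hk φ).continuousAt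

lemma ellipticK_pos (hk : k ^ 2 < 1) : 0 < ellipticK k :=
  intervalIntegral.intervalIntegral_pos_of_pos_on
    ((continuous_one_sub_sq_mul_sin_sq_rpow hk _).intervalIntegrable _ _)
    (fun θ _ => rpow_pos_of_pos (one_sub_sq_mul_sin_sq_pos hk θ) _) (by positivity)

lemma strictMonoOn_ellipticK : StrictMonoOn ellipticK (Ico 0 1) := fun k hk l hl hkl => by
  have hl1 : l ^ 2 < 1 := by nlinarith [hl.1, hl.2]
  have hkl2 : k ^ 2 < l ^ 2 := by nlinarith [hk.1]
  refine intervalIntegral.integral_lt_integral_of_continuousOn_of_le_of_exists_lt (by positivity)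
    (continuous_one_sub_sq_mul_sin_sq_rpow (hkl2.trans hl1) _).continuousOn
    (continuous_one_sub_sq_mul_sin_sq_rpow hl1 _).continuousOn (fun θ _ => ?_)
    ⟨π / 2, ⟨by positivity, le_rfl⟩, ?_⟩
  · refine rpow_le_rpow_of_nonpos (one_sub_sq_mul_sin_sq_pos hl1 θ) ?_ (by norm_num)
    gcongr
  · refine rpow_lt_rpow_of_neg (one_sub_sq_mul_sin_sq_pos hl1 _) ?_ (by norm_num)
    simpa using hkl2

lemma sqrt_one_sub_sq_mem_Ioo (hk : k ∈ Ioo 0 1) : √(1 - k ^ 2) ∈ Ioo 0 1 :=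
  ⟨sqrt_pos.mpr (by nlinarith [hk.1, hk.2]), (sqrt_lt' one_pos).mpr (by nlinarith [hk.1])⟩

lemma strictAntiOn_ellipticK_sqrt_one_sub_sq :
    StrictAntiOn (fun k => ellipticK √(1 - k ^ 2)) (Ioo 0 1) := fun k hk l hl hkl =>
  strictMonoOn_ellipticK (Ioo_subset_Ico_self (sqrt_one_sub_sq_mem_Ioo hl))
    (Ioo_subset_Ico_self (sqrt_one_sub_sq_mem_Ioo hk))
    (sqrt_lt_sqrt (by nlinarith [hl.1, hl.2]) (by nlinarith [hk.1]))

lemma eq_one_of_ellipticK_eq_mul {l s : ℝ} (hk : k ∈ Ioo 0 1) (hl : l ∈ Ioo 0 1)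
    (h : ellipticK l = s * ellipticK k)
    (h' : ellipticK √(1 - l ^ 2) = s * ellipticK √(1 - k ^ 2)) : s = 1 := by
  have hpos {x : ℝ} (hx : x ∈ Ioo 0 1) : 0 < ellipticK x :=
    ellipticK_pos (by nlinarith [hx.1, hx.2])
  have hmono : k < l ↔ 1 < s := by
    rw [← strictMonoOn_ellipticK.lt_iff_lt (Ioo_subset_Ico_self hk) (Ioo_subset_Ico_self hl), h,
      lt_mul_iff_one_lt_left (hpos hk)]
  have hanti : k < l ↔ s < 1 := by
    rw [← strictAntiOn_ellipticK_sqrt_one_sub_sq.lt_iff_gt hl hk, h',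
      mul_lt_iff_lt_one_left (hpos (sqrt_one_sub_sq_mem_Ioo hk))]
  rcases lt_trichotomy s 1 with hs | hs | hs
  · exact absurd (hmono.mp (hanti.mpr hs)) hs.not_gt
  · exact hs
  · exact absurd (hanti.mp (hmono.mpr hs)) hs.not_gt

end EllipticIntegral

/-- The amplitude `φ` with `sin² φ = (e₁ - e₃) / (y - e₃)`, which turns Weierstrass' elliptic
integral `∫ dy / √(4(y - e₁)(y - e₂)(y - e₃))` into Legendre's form. -/
noncomputable def weierstrassAmplitude (e₁ e₃ y : ℝ) : ℝ := arcsin √((e₁ - e₃) / (y - e₃))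

section Amplitude

variable {e₁ e₂ e₃ y : ℝ}

lemma hasDerivAt_weierstrassAmplitude (h₁₃ : e₃ < e₁) (hy : e₁ < y) :
    HasDerivAt (weierstrassAmplitude e₁ e₃) (-√(e₁ - e₃) / (2 * (y - e₃) * √(y - e₁))) y := by
  have hd : 0 < e₁ - e₃ := sub_pos.mpr h₁₃
  have hy₁ : 0 < y - e₁ := sub_pos.mpr hy
  have hy₃ : 0 < y - e₃ := by linarith
  have hcos : 1 - (e₁ - e₃) / (y - e₃) = (y - e₁) / (y - e₃) := by field_simp; ring
  have hlt : √((e₁ - e₃) / (y - e₃)) < 1 := by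
    rw [sqrt_lt' one_pos, one_pow, div_lt_one hy₃]; linarith
  have hquot : HasDerivAt (fun y => (e₁ - e₃) / (y - e₃)) (-(e₁ - e₃) / (y - e₃) ^ 2) y := by
    simpa using (hasDerivAt_const y (e₁ - e₃)).fun_div ((hasDerivAt_id y).sub_const e₃) hy₃.ne'
  refine ((hasDerivAt_arcsin (by linarith [sqrt_nonneg ((e₁ - e₃) / (y - e₃))]) hlt.ne).comp y
    (hquot.sqrt (by positivity))).congr_deriv ?_
  rw [sq_sqrt (by positivity), hcos, sqrt_div hy₁.le, sqrt_div hd.le]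
  field_simp
  rw [sq_sqrt hd.le, sq_sqrt hy₃.le]

lemma rpow_one_sub_sq_mul_sin_weierstrassAmplitude {k : ℝ} (h₁₃ : e₃ < e₁) (hy : e₁ < y)
    (hy₂ : e₂ < y) (hk : k ^ 2 = (e₂ - e₃) / (e₁ - e₃)) :
    (1 - k ^ 2 * sin (weierstrassAmplitude e₁ e₃ y) ^ 2) ^ (-(1 / 2) : ℝ) =
      √(y - e₃) / √(y - e₂) := by
  have hd : 0 < e₁ - e₃ := sub_pos.mpr h₁₃
  have hy₃ : 0 < y - e₃ := by linarith
  have hle : √((e₁ - e₃) / (y - e₃)) ≤ 1 := by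
    rw [sqrt_le_one, div_le_one hy₃]; linarith
  have harg : 1 - k ^ 2 * ((e₁ - e₃) / (y - e₃)) = (y - e₂) / (y - e₃) := by
    rw [hk]; field_simp; ring
  rw [weierstrassAmplitude, sin_arcsin (by linarith [sqrt_nonneg ((e₁ - e₃) / (y - e₃))]) hle,
    sq_sqrt (by positivity), harg, rpow_neg (by have := sub_pos.mpr hy₂; positivity),
    ← sqrt_eq_rpow, sqrt_div (sub_pos.mpr hy₂).le, inv_div]

lemma hasDerivAt_ellipticF_weierstrassAmplitude {k : ℝ} (h₂₃ : e₃ < e₂) (h₁₂ : e₂ < e₁)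
    (hk : k ^ 2 = (e₂ - e₃) / (e₁ - e₃)) (hy : e₁ < y) :
    HasDerivAt (fun y => ellipticF k (weierstrassAmplitude e₁ e₃ y))
      (-√(e₁ - e₃) / (2 * √((y - e₁) * (y - e₂) * (y - e₃)))) y := by
  have h₁₃ := h₂₃.trans h₁₂
  have hk1 : k ^ 2 < 1 := by rw [hk, div_lt_one (sub_pos.mpr h₁₃)]; linarith
  refine ((hasDerivAt_ellipticF hk1 _).comp y
    (hasDerivAt_weierstrassAmplitude h₁₃ hy)).congr_deriv ?_
  have hy₁ : 0 < y - e₁ := sub_pos.mpr hy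
  have hy₂ : 0 < y - e₂ := by linarith
  have hy₃ : 0 < y - e₃ := by linarith
  rw [rpow_one_sub_sq_mul_sin_weierstrassAmplitude h₁₃ hy (h₁₂.trans hy) hk,
    sqrt_mul (by positivity), sqrt_mul hy₁.le]
  field_simp
  rw [sq_sqrt hy₃.le]

lemma tendsto_weierstrassAmplitude_atTop :
    Tendsto (weierstrassAmplitude e₁ e₃) atTop (𝓝 0) := by
  have hquot : Tendsto (fun y => (e₁ - e₃) / (y - e₃)) atTop (𝓝 0) :=
    (tendsto_atTop_add_const_right _ (-e₃) tendsto_id).const_div_atTop _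
  have h := ((continuous_arcsin.comp continuous_sqrt).tendsto 0).comp hquot
  rwa [Function.comp_apply, sqrt_zero, arcsin_zero] at h

lemma tendsto_weierstrassAmplitude_nhds (h₁₃ : e₃ < e₁) :
    Tendsto (weierstrassAmplitude e₁ e₃) (𝓝 e₁) (𝓝 (π / 2)) := by
  have hquot : Tendsto (fun y => (e₁ - e₃) / (y - e₃)) (𝓝 e₁) (𝓝 1) := by
    have hd : e₁ - e₃ ≠ 0 := (sub_pos.mpr h₁₃).ne'
    have hcont : ContinuousAt (fun y => (e₁ - e₃) / (y - e₃)) e₁ :=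
      continuousAt_const.div (continuousAt_id.sub continuousAt_const) hd
    simpa [div_self hd] using hcont.tendsto
  have h := ((continuous_arcsin.comp continuous_sqrt).tendsto 1).comp hquot
  rwa [Function.comp_apply, sqrt_one, arcsin_one] at h

lemma ellipticK_eq_sqrt_mul {k a : ℝ} {r r' : ℝ → ℝ} (h₂₃ : e₃ < e₂) (h₁₂ : e₂ < e₁)
    (hk : k ^ 2 = (e₂ - e₃) / (e₁ - e₃)) (ha : 0 < a)
    (hr : ∀ x ∈ Ioo 0 a, HasDerivAt r (r' x) x) (hr' : ∀ x ∈ Ioo 0 a, r' x < 0)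
    (hr'_sq : ∀ x ∈ Ioo 0 a, r' x ^ 2 = 4 * (r x - e₁) * (r x - e₂) * (r x - e₃))
    (hr_gt : ∀ x ∈ Ioo 0 a, e₁ < r x) (hr_zero : Tendsto r (𝓝[>] 0) atTop)
    (hr_a : Tendsto r (𝓝[<] a) (𝓝 e₁)) : ellipticK k = √(e₁ - e₃) * a := by
  have h₁₃ := h₂₃.trans h₁₂
  have hk1 : k ^ 2 < 1 := by rw [hk, div_lt_one (sub_pos.mpr h₁₃)]; linarith
  have hderiv : ∀ x ∈ Ioo 0 a,
      HasDerivAt (fun x => ellipticF k (weierstrassAmplitude e₁ e₃ (r x))) √(e₁ - e₃) x := by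
    intro x hx
    refine ((hasDerivAt_ellipticF_weierstrassAmplitude h₂₃ h₁₂ hk (hr_gt x hx)).comp x
      (hr x hx)).congr_deriv ?_
    have hpos : 0 < (r x - e₁) * (r x - e₂) * (r x - e₃) := by
      have := sub_pos.mpr (hr_gt x hx)
      have : 0 < r x - e₂ := by linarith
      have : 0 < r x - e₃ := by linarith
      positivity
    have hr'_eq : r' x = -(2 * √((r x - e₁) * (r x - e₂) * (r x - e₃))) := by
      rw [eq_neg_iff_add_eq_zero, add_comm, ← eq_neg_iff_add_eq_zero]
      refine (sq_eq_sq₀ (by positivity) (neg_pos.mpr (hr' x hx)).le).mp ?_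
      rw [neg_sq, hr'_sq x hx, mul_pow, sq_sqrt hpos.le]; ring
    have : √((r x - e₁) * (r x - e₂) * (r x - e₃)) ≠ 0 := (sqrt_pos.mpr hpos).ne'
    rw [hr'_eq]; field_simp
  have hF := continuous_ellipticF hk1
  have h := intervalIntegral.integral_eq_sub_of_hasDerivAt_of_tendsto ha hderiv
    intervalIntegrable_const
    ((hF.tendsto 0).comp (tendsto_weierstrassAmplitude_atTop.comp hr_zero))
    ((hF.tendsto (π / 2)).comp ((tendsto_weierstrassAmplitude_nhds h₁₃).comp hr_a))
  have hF0 : ellipticF k 0 = 0 := intervalIntegral.integral_same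
  rw [hF0, sub_zero, intervalIntegral.integral_const, sub_zero, smul_eq_mul, mul_comm] at h
  exact h.symm

end Amplitude

/-! ### Rectangular lattices -/

lemma neg_of_hasDerivAt_of_tendsto_atTop {f f' : ℝ → ℝ} {c d : ℝ}
    (hf : ∀ x ∈ Ioo c d, HasDerivAt f (f' x) x) (hf' : ∀ x ∈ Ioo c d, f' x ≠ 0)
    (hlim : Tendsto f (𝓝[>] c) atTop) : ∀ x ∈ Ioo c d, f' x < 0 := by
  rcases hasDerivWithinAt_forall_lt_or_forall_gt_of_forall_ne (convex_Ioo c d)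
    (fun x hx => (hf x hx).hasDerivWithinAt) hf' with hneg | hpos
  · exact hneg
  · intro y hy
    have hmono : StrictMonoOn f (Ioo c d) :=
      strictMonoOn_of_hasDerivWithinAt_pos (convex_Ioo c d)
        (fun x hx => (hf x hx).continuousAt.continuousWithinAt)
        (fun x hx => (hf x (interior_subset hx)).hasDerivWithinAt)
        (fun x hx => hpos x (interior_subset hx))
    obtain ⟨x, hfx, hx⟩ := ((hlim.eventually_gt_atTop (f y)).and (Ioo_mem_nhdsGT hy.1)).exists
    exact absurd (hmono ⟨hx.1, hx.2.trans hy.2⟩ hy hx.2) hfx.not_gt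

lemma exists_mem_Ioc_eq_of_tendsto_atTop {f : ℝ → ℝ} {c d y : ℝ} (hcd : c < d)
    (hf : ContinuousOn f (Ioc c d)) (hlim : Tendsto f (𝓝[>] c) atTop) (hy : f d ≤ y) :
    ∃ x ∈ Ioc c d, f x = y := by
  obtain ⟨x, hyx, hx⟩ := ((hlim.eventually_ge_atTop y).and (Ioo_mem_nhdsGT hcd)).exists
  have hsub : Icc x d ⊆ Ioc c d := fun t ht => ⟨hx.1.trans_le ht.1, ht.2⟩
  obtain ⟨t, ht, hty⟩ := intermediate_value_Icc' hx.2.le (hf.mono hsub) ⟨hy, hyx⟩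
  exact ⟨t, hsub ht, hty⟩

lemma ne_two_mul_int_mul {c : ℝ} (hc : c ≠ 0) (m : ℤ) : c ≠ 2 * m * c := fun h => by
  have hm : (2 * m : ℝ) = 1 := mul_right_cancel₀ hc (by linarith)
  norm_cast at hm
  omega

/-- The rectangular lattice with half-periods `a` and `ib`. -/
noncomputable def rectPair {a b : ℝ} (ha : 0 < a) (hb : 0 < b) : PeriodPair where
  ω₁ := 2 * a
  ω₂ := 2 * b * Complex.I
  indep := by
    refine LinearIndependent.pair_iff.mpr fun s t h => ?_
    have hre := congrArg Complex.re h
    have him := congrArg Complex.im h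
    simpa [ha.ne', hb.ne'] using And.intro hre him

namespace rectPair

variable {a b : ℝ} (ha : 0 < a) (hb : 0 < b)

lemma mem_lattice_iff {z : ℂ} :
    z ∈ (rectPair ha hb).lattice ↔ ∃ m n : ℤ, z.re = 2 * m * a ∧ z.im = 2 * n * b := by
  rw [PeriodPair.mem_lattice]
  refine exists₂_congr fun m n => ?_
  rw [Complex.ext_iff, eq_comm, eq_comm (b := z.im)]
  simp [rectPair, mul_comm, mul_left_comm]

lemma conj_mem_lattice {z : ℂ} (hz : z ∈ (rectPair ha hb).lattice) :
    conj z ∈ (rectPair ha hb).lattice := by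
  obtain ⟨m, n, hm, hn⟩ := (mem_lattice_iff ha hb).mp hz
  exact (mem_lattice_iff ha hb).mpr ⟨m, -n, by simpa using hm, by simp [hn]⟩

lemma I_mul_mem_lattice_iff {z : ℂ} :
    z ∈ (rectPair hb ha).lattice ↔ Complex.I * z ∈ (rectPair ha hb).lattice := by
  simp only [mem_lattice_iff, Complex.I_mul_re, Complex.I_mul_im]
  constructor
  · rintro ⟨m, n, hm, hn⟩
    exact ⟨-n, m, by simp [hn], hm⟩
  · rintro ⟨m, n, hm, hn⟩
    exact ⟨n, -m, hn, by push_cast; linarith⟩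

lemma two_mul_ofReal_mem_lattice : 2 * (a : ℂ) ∈ (rectPair ha hb).lattice :=
  (mem_lattice_iff ha hb).mpr ⟨1, 0, by simp, by simp⟩

lemma two_mul_add_mul_I_mem_lattice : 2 * (a + b * Complex.I) ∈ (rectPair ha hb).lattice :=
  (mem_lattice_iff ha hb).mpr ⟨1, 1, by simp, by simp⟩

lemma two_mul_mul_I_mem_lattice : 2 * (b * Complex.I) ∈ (rectPair ha hb).lattice :=
  (mem_lattice_iff ha hb).mpr ⟨0, 1, by simp, by simp⟩

lemma notMem_lattice_of_re_eq {z : ℂ} (hz : z.re = a) : z ∉ (rectPair ha hb).lattice := by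
  rw [mem_lattice_iff]
  rintro ⟨m, -, h, -⟩
  exact ne_two_mul_int_mul ha.ne' m (hz ▸ h)

lemma notMem_lattice_of_im_eq {z : ℂ} (hz : z.im = b) : z ∉ (rectPair ha hb).lattice := by
  rw [mem_lattice_iff]
  rintro ⟨-, n, -, h⟩
  exact ne_two_mul_int_mul hb.ne' n (hz ▸ h)

lemma ofReal_notMem_lattice {x : ℝ} (hx : x ∈ Ioc 0 a) : (x : ℂ) ∉ (rectPair ha hb).lattice := by
  rw [mem_lattice_iff]
  rintro ⟨m, -, h, -⟩
  rw [Complex.ofReal_re] at h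
  have hm : (0 : ℝ) < m := by nlinarith [hx.1]
  have hm1 : (1 : ℝ) ≤ m := by exact_mod_cast (by exact_mod_cast hm : 0 < m)
  nlinarith [hx.2]

/-- The restriction of `℘` to the real axis. -/
noncomputable def realP (x : ℝ) : ℝ := (℘[rectPair ha hb] x).re

/-- The half-period value `e₁ = ℘(a)`, which is real. -/
noncomputable def e₁ : ℝ := (℘[rectPair ha hb] a).re

/-- The half-period value `e₂ = ℘(a + ib)`, which is real. -/
noncomputable def e₂ : ℝ := (℘[rectPair ha hb] (a + b * Complex.I)).re

/-- The half-period value `e₃ = ℘(ib)`, which is real. -/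
noncomputable def e₃ : ℝ := (℘[rectPair ha hb] (b * Complex.I)).re

lemma ofReal_re_weierstrassP {z : ℂ} (hz : ℘[rectPair ha hb] (conj z) = ℘[rectPair ha hb] z) :
    ((℘[rectPair ha hb] z).re : ℂ) = ℘[rectPair ha hb] z :=
  Complex.conj_eq_iff_re.mp (weierstrassP_conj (fun _ => conj_mem_lattice ha hb) z ▸ hz)

lemma ofReal_realP (x : ℝ) : (realP ha hb x : ℂ) = ℘[rectPair ha hb] x :=
  ofReal_re_weierstrassP ha hb (by rw [Complex.conj_ofReal])

lemma ofReal_e₁ : (e₁ ha hb : ℂ) = ℘[rectPair ha hb] a := ofReal_realP ha hb a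

lemma ofReal_e₂ : (e₂ ha hb : ℂ) = ℘[rectPair ha hb] (a + b * Complex.I) := by
  refine ofReal_re_weierstrassP ha hb ?_
  rw [← weierstrassP_add_of_mem _ _ (two_mul_mul_I_mem_lattice ha hb)]
  congr 1
  simp only [map_add, map_mul, Complex.conj_ofReal, Complex.conj_I]
  ring

lemma ofReal_e₃ : (e₃ ha hb : ℂ) = ℘[rectPair ha hb] (b * Complex.I) := by
  refine ofReal_re_weierstrassP ha hb ?_
  rw [← PeriodPair.weierstrassP_neg]
  congr 1
  simp

lemma weierstrassP_swap (z : ℂ) :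
    ℘[rectPair hb ha] z = -℘[rectPair ha hb] (Complex.I * z) := by
  rw [weierstrassP_eq_sq_mul Complex.I_ne_zero fun _ => I_mul_mem_lattice_iff ha hb,
    Complex.I_sq, neg_one_mul]

lemma e₁_swap : e₁ hb ha = -e₃ ha hb := by
  rw [e₁, weierstrassP_swap ha hb, mul_comm, Complex.neg_re, e₃]

lemma e₂_swap : e₂ hb ha = -e₂ ha hb := by
  rw [e₂, weierstrassP_swap ha hb,
    ← weierstrassP_add_of_mem _ _ (two_mul_ofReal_mem_lattice ha hb),
    show Complex.I * (b + a * Complex.I) + 2 * a = a + b * Complex.I by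
      linear_combination (a : ℂ) * Complex.I_sq, Complex.neg_re, e₂]

lemma e₃_swap : e₃ hb ha = -e₁ ha hb := by
  rw [e₁_swap hb ha, neg_neg]

lemma hasDerivAt_weierstrassP_ofReal {x : ℝ} (hx : x ∈ Ioc 0 a) :
    HasDerivAt ℘[rectPair ha hb] (℘'[rectPair ha hb] x) x := by
  rw [← PeriodPair.deriv_weierstrassP]
  exact ((rectPair ha hb).analyticOnNhd_weierstrassP x
    (ofReal_notMem_lattice ha hb hx)).differentiableAt.hasDerivAt

lemma hasDerivAt_realP {x : ℝ} (hx : x ∈ Ioc 0 a) :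
    HasDerivAt (realP ha hb) (℘'[rectPair ha hb] x).re x :=
  (hasDerivAt_weierstrassP_ofReal ha hb hx).real_of_complex

lemma continuousOn_realP : ContinuousOn (realP ha hb) (Ioc 0 a) := fun _ hx =>
  (hasDerivAt_realP ha hb hx).continuousAt.continuousWithinAt

lemma ofReal_re_derivWeierstrassP (x : ℝ) :
    ((℘'[rectPair ha hb] x).re : ℂ) = ℘'[rectPair ha hb] x :=
  Complex.conj_eq_iff_re.mp <| by
    rw [← derivWeierstrassP_conj fun _ => conj_mem_lattice ha hb, Complex.conj_ofReal]

lemma re_derivWeierstrassP_sq {x : ℝ} (hx : x ∈ Ioc 0 a) :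
    (℘'[rectPair ha hb] x).re ^ 2 =
      4 * (realP ha hb x - e₁ ha hb) * (realP ha hb x - e₂ ha hb) * (realP ha hb x - e₃ ha hb) := by
  have h := derivWeierstrassP_sq_eq_mul (rectPair ha hb)
    (notMem_lattice_of_re_eq ha hb (z := a) (by simp))
    (notMem_lattice_of_re_eq ha hb (z := a + b * Complex.I) (by simp))
    (notMem_lattice_of_im_eq ha hb (z := b * Complex.I) (by simp))
    (two_mul_ofReal_mem_lattice ha hb) (two_mul_add_mul_I_mem_lattice ha hb)
    (two_mul_mul_I_mem_lattice ha hb)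
    (fun h => notMem_lattice_of_im_eq ha hb (by simp) (neg_mem h))
    (notMem_lattice_of_re_eq ha hb (by simp)) (notMem_lattice_of_re_eq ha hb (by simp))
    (ofReal_notMem_lattice ha hb hx)
  rw [← ofReal_re_derivWeierstrassP, ← ofReal_e₁, ← ofReal_e₂, ← ofReal_e₃, ← ofReal_realP] at h
  exact_mod_cast h

lemma realP_ne_e₁ {x : ℝ} (hx : x ∈ Ioo 0 a) : realP ha hb x ≠ e₁ ha hb := fun h => by
  have hmem := sub_mem_lattice_of_weierstrassP_eq (rectPair ha hb)
    (notMem_lattice_of_re_eq ha hb (by simp)) (two_mul_ofReal_mem_lattice ha hb)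
    (ofReal_notMem_lattice ha hb ⟨hx.1, hx.2.le⟩) (by rw [← ofReal_realP, h, ofReal_e₁])
  refine ofReal_notMem_lattice ha hb (x := a - x) ⟨sub_pos.mpr hx.2, by linarith [hx.1]⟩ ?_
  simpa using neg_mem hmem

lemma weierstrassP_ofReal_ne {x : ℝ} (hx : x ∈ Ioc 0 a) {ω : ℂ} (hω : ω.im = b)
    (h2ω : 2 * ω ∈ (rectPair ha hb).lattice) :
    ℘[rectPair ha hb] x ≠ ℘[rectPair ha hb] ω := fun h =>
  notMem_lattice_of_im_eq ha hb (z := ω - x) (by simp [hω]) <| by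
    simpa using neg_mem (sub_mem_lattice_of_weierstrassP_eq (rectPair ha hb)
      (notMem_lattice_of_im_eq ha hb hω) h2ω (ofReal_notMem_lattice ha hb hx) h)

lemma realP_ne_e₂ {x : ℝ} (hx : x ∈ Ioc 0 a) : realP ha hb x ≠ e₂ ha hb := by
  have h := weierstrassP_ofReal_ne ha hb hx (by simp) (two_mul_add_mul_I_mem_lattice ha hb)
  rw [← ofReal_realP, ← ofReal_e₂] at h
  exact_mod_cast h

lemma realP_ne_e₃ {x : ℝ} (hx : x ∈ Ioc 0 a) : realP ha hb x ≠ e₃ ha hb := by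
  have h := weierstrassP_ofReal_ne ha hb hx (by simp) (two_mul_mul_I_mem_lattice ha hb)
  rw [← ofReal_realP, ← ofReal_e₃] at h
  exact_mod_cast h

lemma tendsto_realP_zero : Tendsto (realP ha hb) (𝓝[>] 0) atTop := by
  have hcast : Tendsto (fun x : ℝ => (x : ℂ)) (𝓝[>] 0) (𝓝[≠] 0) :=
    tendsto_nhdsWithin_iff.mpr
      ⟨(Complex.continuous_ofReal.tendsto' 0 0 Complex.ofReal_zero).mono_left nhdsWithin_le_nhds,
        by filter_upwards [self_mem_nhdsWithin] with x hx using
          Complex.ofReal_ne_zero.mpr (ne_of_gt hx)⟩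
  have hsq : Tendsto (fun x => x ^ 2 * realP ha hb x) (𝓝[>] 0) (𝓝 1) := by
    refine ((Complex.continuous_re.tendsto 1).comp
      ((tendsto_sq_mul_weierstrassP (rectPair ha hb)).comp hcast)).congr fun x => ?_
    rw [Function.comp_apply, Function.comp_apply, ← ofReal_realP]
    norm_cast
  have hinv : Tendsto (fun x : ℝ => x⁻¹ ^ 2) (𝓝[>] 0) atTop :=
    (tendsto_pow_atTop two_ne_zero).comp tendsto_inv_nhdsGT_zero
  refine (hsq.pos_mul_atTop one_pos hinv).congr' ?_
  filter_upwards [self_mem_nhdsWithin] with x hx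
  have : x ≠ 0 := ne_of_gt hx
  field_simp

lemma tendsto_realP_left : Tendsto (realP ha hb) (𝓝[<] a) (𝓝 (e₁ ha hb)) :=
  (hasDerivAt_realP ha hb (right_mem_Ioc.mpr ha)).continuousAt.tendsto.mono_left
    nhdsWithin_le_nhds

lemma re_derivWeierstrassP_neg {x : ℝ} (hx : x ∈ Ioo 0 a) : (℘'[rectPair ha hb] x).re < 0 := by
  refine neg_of_hasDerivAt_of_tendsto_atTop
    (fun x hx => hasDerivAt_realP ha hb (Ioo_subset_Ioc_self hx)) (fun x hx => ?_)
    (tendsto_realP_zero ha hb) x hx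
  have hx' := Ioo_subset_Ioc_self hx
  rw [← sq_eq_zero_iff.ne, re_derivWeierstrassP_sq ha hb hx']
  have h₁ := sub_ne_zero.mpr (realP_ne_e₁ ha hb hx)
  have h₂ := sub_ne_zero.mpr (realP_ne_e₂ ha hb hx')
  have h₃ := sub_ne_zero.mpr (realP_ne_e₃ ha hb hx')
  positivity

lemma strictAntiOn_realP : StrictAntiOn (realP ha hb) (Ioc 0 a) :=
  strictAntiOn_of_hasDerivWithinAt_neg (convex_Ioc 0 a) (continuousOn_realP ha hb)
    (fun _ hx => (hasDerivAt_realP ha hb (interior_subset hx)).hasDerivWithinAt)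
    (fun _ hx => re_derivWeierstrassP_neg ha hb (interior_Ioc (α := ℝ) ▸ hx))

lemma e₁_lt_realP {x : ℝ} (hx : x ∈ Ioo 0 a) : e₁ ha hb < realP ha hb x :=
  strictAntiOn_realP ha hb (Ioo_subset_Ioc_self hx) (right_mem_Ioc.mpr ha) hx.2

lemma e₂_lt_e₁ : e₂ ha hb < e₁ ha hb := by
  by_contra! h
  obtain ⟨x, hx, hxe⟩ := exists_mem_Ioc_eq_of_tendsto_atTop ha (continuousOn_realP ha hb)
    (tendsto_realP_zero ha hb) h
  exact realP_ne_e₂ ha hb hx hxe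

lemma e₃_lt_e₂ : e₃ ha hb < e₂ ha hb := by
  simpa [e₁_swap ha hb, e₂_swap ha hb] using e₂_lt_e₁ hb ha

lemma ellipticK_eq {k : ℝ}
    (hk : k ^ 2 = (e₂ ha hb - e₃ ha hb) / (e₁ ha hb - e₃ ha hb)) :
    ellipticK k = √(e₁ ha hb - e₃ ha hb) * a :=
  ellipticK_eq_sqrt_mul (e₃_lt_e₂ ha hb) (e₂_lt_e₁ ha hb) hk ha
    (fun _ hx => hasDerivAt_realP ha hb (Ioo_subset_Ioc_self hx))
    (fun _ => re_derivWeierstrassP_neg ha hb)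
    (fun _ hx => re_derivWeierstrassP_sq ha hb (Ioo_subset_Ioc_self hx))
    (fun _ => e₁_lt_realP ha hb) (tendsto_realP_zero ha hb) (tendsto_realP_left ha hb)

lemma e₁_sub_e₃_eq_one {k : ℝ} (hk : k ∈ Ioo 0 1) (hka : ellipticK k = a)
    (hkb : ellipticK √(1 - k ^ 2) = b) : e₁ ha hb - e₃ ha hb = 1 := by
  have h₁₂ := e₂_lt_e₁ ha hb
  have h₂₃ := e₃_lt_e₂ ha hb
  have hd : 0 < e₁ ha hb - e₃ ha hb := by linarith
  obtain ⟨l, hl⟩ : ∃ l, l = √((e₂ ha hb - e₃ ha hb) / (e₁ ha hb - e₃ ha hb)) := ⟨_, rfl⟩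
  have hl2 : l ^ 2 = (e₂ ha hb - e₃ ha hb) / (e₁ ha hb - e₃ ha hb) := by
    rw [hl, sq_sqrt (div_nonneg (by linarith) hd.le)]
  have hl2_lt : l ^ 2 < 1 := by rw [hl2, div_lt_one hd]; linarith
  have hl0 : 0 < l := hl ▸ sqrt_pos.mpr (div_pos (by linarith) hd)
  have hl01 : l ∈ Ioo 0 1 := ⟨hl0, by nlinarith⟩
  have hl' : √(1 - l ^ 2) ^ 2 = (e₂ hb ha - e₃ hb ha) / (e₁ hb ha - e₃ hb ha) := by
    rw [sq_sqrt (by linarith), hl2, e₁_swap ha hb, e₂_swap ha hb, e₃_swap ha hb]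
    have : -e₃ ha hb - -e₁ ha hb ≠ 0 := by linarith
    field_simp
    ring
  have hK := ellipticK_eq ha hb hl2
  have hK' := ellipticK_eq hb ha hl'
  rw [show e₁ hb ha - e₃ hb ha = e₁ ha hb - e₃ ha hb by
    rw [e₁_swap ha hb, e₃_swap ha hb]; ring] at hK'
  rw [← sqrt_eq_one]
  exact eq_one_of_ellipticK_eq_mul hk hl01 (hka.symm ▸ hK) (hkb.symm ▸ hK')

end rectPair

/-! ### Laplace expansion of the hyperbolic integrals -/

lemma integral_pow_mul_exp_neg_mul (n : ℕ) {r : ℝ} (hr : 0 < r) :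
    ∫ t in Ioi (0 : ℝ), t ^ n * exp (-(r * t)) = n.factorial / r ^ (n + 1) := by
  have h := integral_rpow_mul_exp_neg_mul_Ioi (a := n + 1) (by positivity) hr
  rw [Gamma_nat_eq_factorial, add_sub_cancel_right, ← Nat.cast_succ, rpow_natCast] at h
  simp only [rpow_natCast] at h
  rw [h, one_div, inv_pow, inv_mul_eq_div]

lemma integrableOn_pow_mul_exp_neg_mul (n : ℕ) {r : ℝ} (hr : 0 < r) :
    IntegrableOn (fun t => t ^ n * exp (-(r * t))) (Ioi 0) := by
  refine .of_integral_ne_zero ?_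
  rw [integral_pow_mul_exp_neg_mul n hr]
  positivity

lemma integrableOn_mul_cexp_neg_mul {c : ℂ} (hc : 0 < c.re) :
    IntegrableOn (fun t : ℝ => (t : ℂ) * Complex.exp (-(c * t))) (Ioi 0) := by
  refine (integrableOn_pow_mul_exp_neg_mul 1 hc).mono' (by fun_prop) ?_
  filter_upwards [ae_restrict_mem measurableSet_Ioi] with t ht
  rw [norm_mul, Complex.norm_exp, Complex.norm_of_nonneg (le_of_lt ht), pow_one,
    Complex.neg_re, Complex.re_mul_ofReal]

lemma tendsto_pow_mul_cexp_neg_mul_atTop (n : ℕ) {c : ℂ} (hc : 0 < c.re) :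
    Tendsto (fun t : ℝ => (t : ℂ) ^ n * Complex.exp (-(c * t))) atTop (𝓝 0) := by
  rw [tendsto_zero_iff_norm_tendsto_zero]
  refine (tendsto_rpow_mul_exp_neg_mul_atTop_nhds_zero n c.re hc).congr' ?_
  filter_upwards [eventually_ge_atTop 0] with t ht
  rw [norm_mul, norm_pow, Complex.norm_exp, Complex.norm_of_nonneg ht, rpow_natCast,
    Complex.neg_re, Complex.re_mul_ofReal, neg_mul]

lemma hasDerivAt_mul_cexp_neg_mul {c : ℂ} (hc : c ≠ 0) (z : ℂ) :
    HasDerivAt (fun z => -(z / c + 1 / c ^ 2) * Complex.exp (-(c * z)))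
      (z * Complex.exp (-(c * z))) z := by
  have hlin : HasDerivAt (fun z => -(z / c + 1 / c ^ 2)) (-(1 / c)) z :=
    (((hasDerivAt_id z).div_const c).add_const _).neg
  have hexp : HasDerivAt (fun z => -(c * z)) (-(c * 1)) z :=
    ((hasDerivAt_id z).const_mul c).neg
  refine (hlin.mul hexp.cexp).congr_deriv ?_
  field_simp
  ring

lemma integral_mul_cexp_neg_mul {c : ℂ} (hc : 0 < c.re) :
    ∫ t in Ioi (0 : ℝ), (t : ℂ) * Complex.exp (-(c * t)) = 1 / c ^ 2 := by
  have hc0 : c ≠ 0 := fun h => hc.ne' (by simp [h])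
  have hlim : Tendsto (fun t : ℝ => -((t : ℂ) / c + 1 / c ^ 2) * Complex.exp (-(c * t)))
      atTop (𝓝 0) := by
    have h := ((tendsto_pow_mul_cexp_neg_mul_atTop 1 hc).const_mul (-(1 / c))).add
      ((tendsto_pow_mul_cexp_neg_mul_atTop 0 hc).const_mul (-(1 / c ^ 2)))
    rw [mul_zero, mul_zero, add_zero] at h
    exact h.congr fun t => by ring
  rw [integral_Ioi_of_hasDerivAt_of_tendsto'
    (fun t _ => (hasDerivAt_mul_cexp_neg_mul hc0 t).comp_ofReal)
    (integrableOn_mul_cexp_neg_mul hc) hlim]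
  simp

lemma norm_one_sub_cexp_neg_le {w : ℂ} (hw : 0 ≤ w.re) : ‖1 - Complex.exp (-w)‖ ≤ ‖w‖ := by
  have h := Convex.norm_image_sub_le_of_norm_hasDerivWithin_le (𝕜 := ℂ)
    (f := fun z => Complex.exp (-z)) (f' := fun z => -Complex.exp (-z)) (s := {z | 0 ≤ z.re})
    (x := w) (y := 0) (C := 1)
    (fun z _ => by simpa using (hasDerivAt_neg z).cexp.hasDerivWithinAt)
    (fun z hz => by simpa [Complex.norm_exp] using hz) (convex_halfSpace_re_ge 0) hw (by simp)
  simpa using h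

/-- The `m`-th term of the geometric expansion of `1 / (2 cosh w)`, whose consecutive terms are
paired so that a factor vanishing at `w = 0` can be split off. -/
noncomputable def sechTerm (w : ℂ) (m : ℕ) : ℂ :=
  Complex.exp (-((4 * m + 1) * w)) - Complex.exp (-((4 * m + 3) * w))

lemma sechTerm_eq_mul_pow (w : ℂ) (m : ℕ) :
    sechTerm w m =
      (Complex.exp (-w) - Complex.exp (-w) ^ 3) * (Complex.exp (-w) ^ 4) ^ m := by
  have hexp (n : ℕ) : Complex.exp (-(n * w)) = Complex.exp (-w) ^ n := by
    rw [← Complex.exp_nat_mul, mul_neg]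
  have h₁ := hexp (4 * m + 1)
  have h₃ := hexp (4 * m + 3)
  push_cast at h₁ h₃
  rw [sechTerm, h₁, h₃]
  ring

lemma norm_cexp_neg_lt_one {w : ℂ} (hw : 0 < w.re) : ‖Complex.exp (-w)‖ < 1 := by
  rwa [Complex.norm_exp, exp_lt_one_iff, Complex.neg_re, neg_lt_zero]

lemma norm_cexp_neg_pow_lt_one {w : ℂ} (hw : 0 < w.re) {n : ℕ} (hn : n ≠ 0) :
    ‖Complex.exp (-w) ^ n‖ < 1 := by
  rw [norm_pow]
  exact pow_lt_one₀ (norm_nonneg _) (norm_cexp_neg_lt_one hw) hn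

lemma hasSum_sechTerm {w : ℂ} (hw : 0 < w.re) :
    HasSum (sechTerm w) (1 / (2 * Complex.cosh w)) := by
  set E := Complex.exp (-w) with hE
  have hE₀ : E ≠ 0 := Complex.exp_ne_zero _
  have hne {n : ℕ} (hn : n ≠ 0) : 1 - E ^ n ≠ 0 := fun h =>
    (norm_cexp_neg_pow_lt_one hw hn).ne (by rw [← hE, ← sub_eq_zero.1 h, norm_one])
  have hcosh : 2 * Complex.cosh w = E⁻¹ + E := by
    rw [Complex.two_cosh, hE, Complex.exp_neg, inv_inv]
  have hadd : 1 + E ^ 2 ≠ 0 := fun h => hne four_ne_zero (by linear_combination (1 - E ^ 2) * h)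
  have hvalue : (E - E ^ 3) * (1 - E ^ 4)⁻¹ = 1 / (2 * Complex.cosh w) := by
    have h₄ := hne four_ne_zero
    rw [hcosh]
    field_simp
    ring
  rw [funext (sechTerm_eq_mul_pow w), ← hvalue]
  exact (hasSum_geometric_of_norm_lt_one (norm_cexp_neg_pow_lt_one hw four_ne_zero)).mul_left _

lemma summable_norm_sechTerm {w : ℂ} (hw : 0 < w.re) : Summable fun m => ‖sechTerm w m‖ := by
  simp only [sechTerm_eq_mul_pow, norm_mul, norm_pow _ (_ : ℕ)]
  refine (summable_geometric_of_lt_one (by positivity) ?_).mul_left _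
  simpa using norm_cexp_neg_pow_lt_one hw four_ne_zero

lemma norm_sechTerm (w : ℂ) (m : ℕ) :
    ‖sechTerm w m‖ = exp (-((4 * m + 1) * w.re)) * ‖1 - Complex.exp (-(2 * w))‖ := by
  have hfac : sechTerm w m =
      Complex.exp (-((4 * m + 1) * w)) * (1 - Complex.exp (-(2 * w))) := by
    rw [sechTerm, mul_sub, ← Complex.exp_add]
    ring_nf
  rw [hfac, norm_mul, Complex.norm_exp]
  simp

lemma norm_sechTerm_le_two_mul {w : ℂ} (hw : 0 ≤ w.re) (m : ℕ) :
    ‖sechTerm w m‖ ≤ exp (-((4 * m + 1) * w.re)) * 2 := by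
  rw [norm_sechTerm]
  gcongr
  refine (norm_sub_le _ _).trans ?_
  rw [norm_one, Complex.norm_exp]
  have : exp (-(2 * w)).re ≤ 1 := by simpa using hw
  linarith

lemma norm_sechTerm_le_norm_mul {w : ℂ} (hw : 0 ≤ w.re) (m : ℕ) :
    ‖sechTerm w m‖ ≤ exp (-((4 * m + 1) * w.re)) * (2 * ‖w‖) := by
  rw [norm_sechTerm]
  gcongr
  simpa using norm_one_sub_cexp_neg_le (w := 2 * w) (by simpa using hw)

-- Since `X + Y` dominates both `X` and `Y`, its cube is at least `X ^ (3 / 2) * Y ^ (3 / 2)`.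
lemma summable_one_div_add_pow_three {p q : ℝ} (hp : 0 < p) (hq : 0 < q) :
    Summable fun i : ℕ × ℕ => 1 / ((4 * i.1 + 1) * p + (4 * i.2 + 1) * q) ^ 3 := by
  have hs {r : ℝ} (hr : 0 < r) : Summable fun n : ℕ => 1 / ((4 * n + 1) * r) ^ (3 / 2 : ℝ) := by
    refine (((summable_one_div_nat_add_rpow (1 / 4) (3 / 2)).2 (by norm_num)).mul_left
      (1 / (4 * r) ^ (3 / 2 : ℝ))).congr fun n => ?_
    rw [abs_of_pos (by positivity), one_div_mul_one_div,
      ← mul_rpow (by positivity) (by positivity)]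
    ring_nf
  refine ((hs hp).mul_of_nonneg (hs hq) (fun n => by positivity)
    fun n => by positivity).of_nonneg_of_le (fun i => by positivity) fun i => ?_
  have hX : 0 < (4 * i.1 + 1) * p := by positivity
  have hY : 0 < (4 * i.2 + 1) * q := by positivity
  rw [one_div_mul_one_div]
  refine one_div_le_one_div_of_le (by positivity) ?_
  calc ((4 * i.1 + 1) * p) ^ (3 / 2 : ℝ) * ((4 * i.2 + 1) * q) ^ (3 / 2 : ℝ)
      ≤ ((4 * i.1 + 1) * p + (4 * i.2 + 1) * q) ^ (3 / 2 : ℝ) *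
        ((4 * i.1 + 1) * p + (4 * i.2 + 1) * q) ^ (3 / 2 : ℝ) := by gcongr <;> linarith
    _ = ((4 * i.1 + 1) * p + (4 * i.2 + 1) * q) ^ 3 := by
      rw [← rpow_add (by positivity), ← rpow_natCast]; norm_num

/-- The alternating sum of `g` over the four odd pairs `(4x + 1, 4y + 1)`, …, `(4x + 3, 4y + 3)`,
with real `x` and `y` so that it serves for indices in both `ℕ` and `ℤ`. -/
def alternatingBlock {E : Type*} [AddCommGroup E] (g : ℝ → ℝ → E) (x y : ℝ) : E :=
  g (4 * x + 1) (4 * y + 1) - g (4 * x + 3) (4 * y + 1)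
    - g (4 * x + 1) (4 * y + 3) + g (4 * x + 3) (4 * y + 3)

lemma alternatingBlock_neg {E : Type*} [AddCommGroup E] (g : ℝ → ℝ → E) (x y : ℝ) :
    alternatingBlock (-g) x y = -alternatingBlock g x y := by
  simp only [alternatingBlock, Pi.neg_apply]
  abel

lemma alternatingBlock_neg_add_one_left {E : Type*} [AddCommGroup E] (g : ℝ → ℝ → E) (x y : ℝ) :
    alternatingBlock g (-(x + 1)) y = -alternatingBlock (fun M N => g (-M) N) x y := by
  simp only [alternatingBlock]
  rw [show 4 * -(x + 1) + 1 = -(4 * x + 3) by ring,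
    show 4 * -(x + 1) + 3 = -(4 * x + 1) by ring]
  abel

lemma alternatingBlock_neg_add_one_right {E : Type*} [AddCommGroup E] (g : ℝ → ℝ → E) (x y : ℝ) :
    alternatingBlock g x (-(y + 1)) = -alternatingBlock (fun M N => g M (-N)) x y := by
  simp only [alternatingBlock]
  rw [show 4 * -(y + 1) + 1 = -(4 * y + 3) by ring,
    show 4 * -(y + 1) + 3 = -(4 * y + 1) by ring]
  abel

lemma alternatingBlock_congr {E : Type*} [AddCommGroup E] {g h : ℝ → ℝ → E} {x y : ℝ} (hx : 0 ≤ x)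
    (hy : 0 ≤ y) (hgh : ∀ M N, 0 < M → 0 < N → g M N = h M N) :
    alternatingBlock g x y = alternatingBlock h x y := by
  unfold alternatingBlock
  rw [hgh _ _ (by positivity) (by positivity), hgh _ _ (by positivity) (by positivity),
    hgh _ _ (by positivity) (by positivity), hgh _ _ (by positivity) (by positivity)]

lemma hasSum_alternatingBlock {ι E : Type*} [AddCommGroup E] [TopologicalSpace E]
    [IsTopologicalAddGroup E] {f : ℝ → ℝ → ι → E} {s : ℝ → ℝ → E} {x y : ℝ}
    (hf : ∀ M N, HasSum (f M N) (s M N)) :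
    HasSum (fun i => alternatingBlock (fun M N => f M N i) x y) (alternatingBlock s x y) :=
  (((hf _ _).sub (hf _ _)).sub (hf _ _)).add (hf _ _)

section Integral

variable {X E : Type*} [MeasurableSpace X] {μ : Measure X} [NormedAddCommGroup E]
  {f : ℝ → ℝ → X → E} {x y : ℝ}

lemma integrable_alternatingBlock (hx : 0 ≤ x) (hy : 0 ≤ y)
    (hf : ∀ M N, 0 < M → 0 < N → Integrable (f M N) μ) :
    Integrable (fun t => alternatingBlock (fun M N => f M N t) x y) μ :=
  (((hf _ _ (by positivity) (by positivity)).sub (hf _ _ (by positivity) (by positivity))).sub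
    (hf _ _ (by positivity) (by positivity))).add (hf _ _ (by positivity) (by positivity))

lemma integral_alternatingBlock [NormedSpace ℝ E] (hx : 0 ≤ x) (hy : 0 ≤ y)
    (hf : ∀ M N, 0 < M → 0 < N → Integrable (f M N) μ) :
    ∫ t, alternatingBlock (fun M N => f M N t) x y ∂μ =
      alternatingBlock (fun M N => ∫ t, f M N t ∂μ) x y := by
  have h₁₁ := hf (4 * x + 1) (4 * y + 1) (by positivity) (by positivity)
  have h₃₁ := hf (4 * x + 3) (4 * y + 1) (by positivity) (by positivity)
  have h₁₃ := hf (4 * x + 1) (4 * y + 3) (by positivity) (by positivity)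
  have h₃₃ := hf (4 * x + 3) (4 * y + 3) (by positivity) (by positivity)
  simp only [alternatingBlock]
  rw [← integral_sub' h₁₁ h₃₁, ← integral_sub' (h₁₁.sub h₃₁) h₁₃,
    ← integral_add' ((h₁₁.sub h₃₁).sub h₁₃) h₃₃]
  rfl

end Integral

/-- The integral `∫₀^∞ t / (4 cosh(αt) cosh(βt)) dt`. -/
noncomputable def coshIntegral (α β : ℂ) : ℂ :=
  ∫ t in Ioi (0 : ℝ), (t : ℂ) / (4 * (Complex.cosh (α * t) * Complex.cosh (β * t)))

/-- The term of index `(m, n)` in the expansion of the integrand of `coshIntegral α β`. -/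
noncomputable def coshIntegrandTerm (α β : ℂ) (i : ℕ × ℕ) (t : ℝ) : ℂ :=
  t * (sechTerm (α * t) i.1 * sechTerm (β * t) i.2)

section CoshIntegral

variable {α β : ℂ}

lemma hasSum_coshIntegrandTerm (hα : 0 < α.re) (hβ : 0 < β.re) {t : ℝ} (ht : 0 < t) :
    HasSum (fun i => coshIntegrandTerm α β i t)
      ((t : ℂ) / (4 * (Complex.cosh (α * t) * Complex.cosh (β * t)))) := by
  have hαt : 0 < (α * t).re := by simpa using mul_pos hα ht
  have hβt : 0 < (β * t).re := by simpa using mul_pos hβ ht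
  rw [show (t : ℂ) / (4 * (Complex.cosh (α * t) * Complex.cosh (β * t))) =
    t * (1 / (2 * Complex.cosh (α * t)) * (1 / (2 * Complex.cosh (β * t)))) by ring]
  exact ((hasSum_sechTerm hαt).mul (hasSum_sechTerm hβt) (summable_mul_of_summable_norm
    (summable_norm_sechTerm hαt) (summable_norm_sechTerm hβt))).mul_left _

lemma coshIntegrandTerm_eq_alternatingBlock (i : ℕ × ℕ) (t : ℝ) :
    coshIntegrandTerm α β i t =
      alternatingBlock (fun M N => (t : ℂ) * Complex.exp (-((M * α + N * β) * t))) i.1 i.2 := by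
  have hexp (M N : ℂ) : Complex.exp (-((M * α + N * β) * t)) =
      Complex.exp (-(M * (α * t))) * Complex.exp (-(N * (β * t))) := by
    rw [← Complex.exp_add]
    ring_nf
  simp only [coshIntegrandTerm, sechTerm, alternatingBlock, hexp]
  push_cast
  ring

lemma re_mul_add_mul_pos (hα : 0 < α.re) (hβ : 0 < β.re) {M N : ℝ} (hM : 0 < M) (hN : 0 < N) :
    0 < (M * α + N * β).re := by
  rw [Complex.add_re, Complex.re_ofReal_mul, Complex.re_ofReal_mul]
  positivity

lemma integrableOn_coshIntegrandTerm (hα : 0 < α.re) (hβ : 0 < β.re) (i : ℕ × ℕ) :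
    IntegrableOn (coshIntegrandTerm α β i) (Ioi 0) := by
  rw [funext (coshIntegrandTerm_eq_alternatingBlock i)]
  exact integrable_alternatingBlock (Nat.cast_nonneg _) (Nat.cast_nonneg _) fun M N hM hN =>
    integrableOn_mul_cexp_neg_mul (re_mul_add_mul_pos hα hβ hM hN)

lemma integral_coshIntegrandTerm (hα : 0 < α.re) (hβ : 0 < β.re) (i : ℕ × ℕ) :
    ∫ t in Ioi 0, coshIntegrandTerm α β i t =
      alternatingBlock (fun M N => 1 / (M * α + N * β) ^ 2) i.1 i.2 := by
  simp only [coshIntegrandTerm_eq_alternatingBlock]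
  rw [integral_alternatingBlock (Nat.cast_nonneg _) (Nat.cast_nonneg _) fun M N hM hN =>
    integrableOn_mul_cexp_neg_mul (re_mul_add_mul_pos hα hβ hM hN)]
  exact alternatingBlock_congr (Nat.cast_nonneg _) (Nat.cast_nonneg _) fun M N hM hN =>
    integral_mul_cexp_neg_mul (re_mul_add_mul_pos hα hβ hM hN)

lemma norm_coshIntegrandTerm_le (hα : 0 ≤ α.re) (hβ : 0 ≤ β.re) (i : ℕ × ℕ) {t : ℝ} (ht : 0 ≤ t) :
    ‖coshIntegrandTerm α β i t‖ ≤
      4 * ‖α‖ * (t ^ 2 * exp (-(((4 * i.1 + 1) * α.re + (4 * i.2 + 1) * β.re) * t))) := by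
  have hαt : 0 ≤ (α * t).re := by simpa using mul_nonneg hα ht
  have hβt : 0 ≤ (β * t).re := by simpa using mul_nonneg hβ ht
  rw [coshIntegrandTerm, norm_mul, norm_mul, Complex.norm_of_nonneg ht]
  calc t * (‖sechTerm (α * t) i.1‖ * ‖sechTerm (β * t) i.2‖)
      ≤ t * (exp (-((4 * i.1 + 1) * (α * t).re)) * (2 * ‖α * t‖) *
          (exp (-((4 * i.2 + 1) * (β * t).re)) * 2)) := by
        gcongr
        · exact norm_sechTerm_le_norm_mul hαt _
        · exact norm_sechTerm_le_two_mul hβt _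
    _ = 4 * ‖α‖ * (t ^ 2 * (exp (-((4 * i.1 + 1) * (α * t).re)) *
          exp (-((4 * i.2 + 1) * (β * t).re)))) := by
        rw [norm_mul, Complex.norm_of_nonneg ht]
        ring
    _ = _ := by
        rw [← exp_add, Complex.re_mul_ofReal, Complex.re_mul_ofReal]
        ring_nf

lemma summable_integral_norm_coshIntegrandTerm (hα : 0 < α.re) (hβ : 0 < β.re) :
    Summable fun i => ∫ t in Ioi 0, ‖coshIntegrandTerm α β i t‖ := by
  refine ((summable_one_div_add_pow_three hα hβ).mul_left (8 * ‖α‖)).of_nonneg_of_le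
    (fun i => by positivity) fun i => ?_
  have hr : 0 < (4 * i.1 + 1) * α.re + (4 * i.2 + 1) * β.re := by positivity
  calc ∫ t in Ioi 0, ‖coshIntegrandTerm α β i t‖
      ≤ ∫ t in Ioi 0, 4 * ‖α‖ *
          (t ^ 2 * exp (-(((4 * i.1 + 1) * α.re + (4 * i.2 + 1) * β.re) * t))) :=
        setIntegral_mono_on (integrableOn_coshIntegrandTerm hα hβ i).norm
          ((integrableOn_pow_mul_exp_neg_mul 2 hr).const_mul _) measurableSet_Ioi
          fun t ht => norm_coshIntegrandTerm_le hα.le hβ.le i (le_of_lt ht)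
    _ = _ := by
        rw [integral_const_mul, integral_pow_mul_exp_neg_mul 2 hr, Nat.factorial_two]
        push_cast
        ring

lemma hasSum_coshIntegral (hα : 0 < α.re) (hβ : 0 < β.re) :
    HasSum (fun i : ℕ × ℕ => alternatingBlock (fun M N => 1 / (M * α + N * β) ^ 2) i.1 i.2)
      (coshIntegral α β) := by
  have h := hasSum_integral_of_summable_integral_norm (integrableOn_coshIntegrandTerm hα hβ)
    (summable_integral_norm_coshIntegrandTerm hα hβ)
  simp only [integral_coshIntegrandTerm hα hβ] at h
  rwa [setIntegral_congr_fun measurableSet_Ioi fun t ht =>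
    (hasSum_coshIntegrandTerm hα hβ ht).tsum_eq] at h

end CoshIntegral

/-! ### Lattice sums -/

section LatticeSum

variable (L : PeriodPair)

lemma alternatingBlock_weierstrassP :
    alternatingBlock (fun M N : ℝ => ℘[L] (-(M * (L.ω₁ / 4) + N * (L.ω₂ / 4)))) 0 0 =
      2 * (℘[L] ((L.ω₁ + L.ω₂) / 4) - ℘[L] ((L.ω₁ - L.ω₂) / 4)) := by
  set u := L.ω₁ / 4 with hu
  set v := L.ω₂ / 4 with hv
  have hω₁ : L.ω₁ = 4 * u := by rw [hu]; ring
  have hω₂ : L.ω₂ = 4 * v := by rw [hv]; ring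
  have h₃₁ : ℘[L] (-(3 * u + v)) = ℘[L] (u - v) := by
    rw [← weierstrassP_add_of_mem L _ L.ω₁_mem_lattice, hω₁]
    ring_nf
  have h₁₃ : ℘[L] (-(u + 3 * v)) = ℘[L] (u - v) := by
    rw [← weierstrassP_add_of_mem L _ L.ω₂_mem_lattice, hω₂, ← L.weierstrassP_neg]
    ring_nf
  have h₃₃ : ℘[L] (-(3 * u + 3 * v)) = ℘[L] (u + v) := by
    rw [← weierstrassP_add_of_mem L _ (add_mem L.ω₁_mem_lattice L.ω₂_mem_lattice), hω₁, hω₂]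
    ring_nf
  simp only [alternatingBlock, mul_zero, zero_add, Complex.ofReal_one, Complex.ofReal_ofNat,
    one_mul]
  rw [L.weierstrassP_neg, h₃₁, h₁₃, h₃₃, add_div, sub_div, ← hu, ← hv]
  ring

lemma hasSum_alternatingBlock_one_div_sq :
    HasSum (fun p : ℤ × ℤ => alternatingBlock
        (fun M N : ℝ => 1 / (M * (L.ω₁ / 4) + N * (L.ω₂ / 4)) ^ 2) p.1 p.2)
      (2 * (℘[L] ((L.ω₁ + L.ω₂) / 4) - ℘[L] ((L.ω₁ - L.ω₂) / 4))) := by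
  rw [← alternatingBlock_weierstrassP]
  refine (hasSum_alternatingBlock fun M N : ℝ => hasSum_int_prod_weierstrassP L
    (-(M * (L.ω₁ / 4) + N * (L.ω₂ / 4)))).congr_fun fun p => ?_
  have hterm (c d : ℝ) : 1 / ((4 * p.1 + c) * (L.ω₁ / 4) + (4 * p.2 + d) * (L.ω₂ / 4)) ^ 2 =
      1 / (-(c * (L.ω₁ / 4) + d * (L.ω₂ / 4)) - (p.1 * L.ω₁ + p.2 * L.ω₂)) ^ 2 := by
    rw [← neg_sq]
    ring_nf
  simp only [alternatingBlock, mul_zero, zero_add, ← hterm]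
  push_cast
  ring

variable {L}

-- The positive and negative quadrants of the lattice sum each give the first integral. On the
-- other two, `1 / (Mα - Nβ) ^ 2 = -1 / (M(-iα) + N(iβ)) ^ 2`, which gives the second one.
lemma coshIntegral_add_coshIntegral (h₁ : 0 < L.ω₁.re) (h₂ : 0 < L.ω₂.re) (h₁' : 0 < L.ω₁.im)
    (h₂' : L.ω₂.im < 0) :
    coshIntegral (L.ω₁ / 4) (L.ω₂ / 4) +
        coshIntegral (-Complex.I * (L.ω₁ / 4)) (Complex.I * (L.ω₂ / 4)) =
      ℘[L] ((L.ω₁ + L.ω₂) / 4) - ℘[L] ((L.ω₁ - L.ω₂) / 4) := by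
  have hsum := hasSum_alternatingBlock_one_div_sq L
  have hre := hasSum_coshIntegral (α := L.ω₁ / 4) (β := L.ω₂ / 4) (by simpa) (by simpa)
  have him := hasSum_coshIntegral (α := -Complex.I * (L.ω₁ / 4)) (β := Complex.I * (L.ω₂ / 4))
    (by simpa) (by simpa using div_neg_of_neg_of_pos h₂' four_pos)
  set G := fun M N : ℝ => 1 / (M * (L.ω₁ / 4) + N * (L.ω₂ / 4)) ^ 2
  set H := fun M N : ℝ => 1 / (M * (-Complex.I * (L.ω₁ / 4)) + N * (Complex.I * (L.ω₂ / 4))) ^ 2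
  have hleft : (fun M N => G (-M) N) = -H := by
    ext M N
    simp only [G, H, Pi.neg_apply]
    rw [← div_neg]
    congr 1
    push_cast
    linear_combination (M * (L.ω₁ / 4) - N * (L.ω₂ / 4)) ^ 2 * Complex.I_sq
  have hboth : (fun M N => G (-M) (-N)) = G := by
    ext M N
    simp only [G]
    push_cast
    ring_nf
  have hright : (fun M N => G M (-N)) = -H := by
    rw [← hleft]
    conv_rhs => rw [← hboth]
    simp only [neg_neg]
  have hquad := hasSum_int_prod_int_of_quadrants
    (f := fun p : ℤ × ℤ => alternatingBlock G p.1 p.2)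
    (by exact_mod_cast hre)
    (him.congr_fun fun p => by
      push_cast
      rw [alternatingBlock_neg_add_one_right, hright, alternatingBlock_neg, neg_neg])
    (him.congr_fun fun p => by
      push_cast
      rw [alternatingBlock_neg_add_one_left, hleft, alternatingBlock_neg, neg_neg])
    (hre.congr_fun fun p => by
      push_cast
      rw [alternatingBlock_neg_add_one_left, alternatingBlock_neg_add_one_right, neg_neg, hboth])
  linear_combination (hquad.unique hsum) / 2

end LatticeSum

lemma coshIntegral_half_add_half_sub (a b : ℝ) :
    coshIntegral ((a + b * Complex.I) / 2) ((a - b * Complex.I) / 2) =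
      ((∫ t in Ioi (0 : ℝ), t / (cosh (a * t) + cos (b * t)) : ℝ) : ℂ) / 2 := by
  rw [coshIntegral, ← integral_complex_ofReal, ← integral_div]
  congr 1 with t
  have h : 2 * (Complex.cosh ((a + b * Complex.I) / 2 * t) *
      Complex.cosh ((a - b * Complex.I) / 2 * t)) =
      Complex.cosh (a * t) + Complex.cos (b * t) := by
    rw [← Complex.cosh_mul_I,
      show (a * t : ℂ) = (a + b * Complex.I) / 2 * t + (a - b * Complex.I) / 2 * t by ring,
      show (b * t * Complex.I : ℂ) = (a + b * Complex.I) / 2 * t - (a - b * Complex.I) / 2 * t by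
        ring,
      Complex.cosh_add, Complex.cosh_sub]
    ring
  push_cast
  rw [← h]
  ring

/-- The index-two sublattice of `rectPair ha hb` with periods `2(a + ib)` and `2(a - ib)`. -/
noncomputable def diagPair {a b : ℝ} (ha : 0 < a) (hb : 0 < b) : PeriodPair where
  ω₁ := 2 * (a + b * Complex.I)
  ω₂ := 2 * (a - b * Complex.I)
  indep := by
    refine LinearIndependent.pair_iff.mpr fun s t h => ?_
    have hre : (s + t) * (2 * a) = 0 := by
      linear_combination (by simpa using congrArg Complex.re h : s * (2 * a) + t * (2 * a) = 0)
    have him : (s - t) * (2 * b) = 0 := by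
      linear_combination (by simpa using congrArg Complex.im h : s * (2 * b) + -(t * (2 * b)) = 0)
    have hst := (mul_eq_zero.mp hre).resolve_right (by positivity)
    have hst' := (mul_eq_zero.mp him).resolve_right (by positivity)
    constructor <;> linarith

section DiagPair

variable {a b : ℝ} (ha : 0 < a) (hb : 0 < b)

lemma mem_diagPair_lattice_iff {z : ℂ} : z ∈ (diagPair ha hb).lattice ↔
    ∃ m n : ℤ, z.re = 2 * (m + n) * a ∧ z.im = 2 * (m - n) * b := by
  rw [PeriodPair.mem_lattice]
  refine exists₂_congr fun m n => ?_
  have h : m * (diagPair ha hb).ω₁ + n * (diagPair ha hb).ω₂ =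
      ⟨2 * (m + n) * a, 2 * (m - n) * b⟩ := by
    rw [Complex.mk_eq_add_mul_I]
    simp only [diagPair]
    push_cast
    ring
  rw [h, Complex.ext_iff, eq_comm, eq_comm (b := z.im)]

lemma two_mul_notMem_diagPair_lattice : 2 * (a : ℂ) ∉ (diagPair ha hb).lattice := by
  rw [mem_diagPair_lattice_iff]
  rintro ⟨m, n, hre, him⟩
  rw [show (2 * (a : ℂ)).re = 2 * a by simp] at hre
  rw [show (2 * (a : ℂ)).im = 0 by simp] at him
  have hadd : (m + n : ℝ) = 1 := mul_right_cancel₀ ha.ne' (by linarith)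
  have hsub : (m - n : ℝ) = 0 := mul_right_cancel₀ hb.ne' (by linarith)
  norm_cast at hadd hsub
  omega

lemma mem_rectPair_lattice_iff_mem_diagPair_lattice (z : ℂ) : z ∈ (rectPair ha hb).lattice ↔
    z ∈ (diagPair ha hb).lattice ∨ z - 2 * a ∈ (diagPair ha hb).lattice := by
  simp only [rectPair.mem_lattice_iff, mem_diagPair_lattice_iff]
  constructor
  · rintro ⟨m, n, hm, hn⟩
    rcases Int.even_or_odd' (m + n) with ⟨c, hc | hc⟩
    · obtain rfl : m = c + (c - n) := by omega
      exact .inl ⟨c, c - n, by simpa using hm, by simpa using hn⟩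
    · obtain rfl : m = c + (c - n) + 1 := by omega
      refine .inr ⟨c, c - n, ?_, by simpa using hn⟩
      rw [Complex.sub_re, hm, show (2 * (a : ℂ)).re = 2 * a by simp]
      push_cast
      ring
  · rintro (⟨m, n, hm, hn⟩ | ⟨m, n, hm, hn⟩)
    · exact ⟨m + n, m - n, by simpa using hm, by simpa using hn⟩
    · refine ⟨m + n + 1, m - n, ?_, by simpa using hn⟩
      rw [Complex.sub_re, show (2 * (a : ℂ)).re = 2 * a by simp] at hm
      push_cast
      linarith

lemma weierstrassP_rectPair_eq (z : ℂ) :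
    ℘[rectPair ha hb] z =
      ℘[diagPair ha hb] z + (℘[diagPair ha hb] (z - 2 * a) - ℘[diagPair ha hb] (2 * a)) :=
  weierstrassP_eq_of_index_two (two_mul_notMem_diagPair_lattice ha hb)
    (mem_rectPair_lattice_iff_mem_diagPair_lattice ha hb) z

lemma e₁_sub_e₃_eq_weierstrassP_diagPair :
    (rectPair.e₁ ha hb - rectPair.e₃ ha hb : ℂ) =
      2 * (℘[diagPair ha hb] a - ℘[diagPair ha hb] (b * Complex.I)) := by
  have hreal : ℘[diagPair ha hb] (a - 2 * a) = ℘[diagPair ha hb] a := by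
    rw [← PeriodPair.weierstrassP_neg]
    ring_nf
  have himag : ℘[diagPair ha hb] (b * Complex.I - 2 * a) =
      ℘[diagPair ha hb] (b * Complex.I) := by
    rw [← weierstrassP_add_of_mem _ _ (diagPair ha hb).ω₂_mem_lattice,
      ← PeriodPair.weierstrassP_neg]
    simp only [diagPair]
    ring_nf
  rw [rectPair.ofReal_e₁, rectPair.ofReal_e₃, weierstrassP_rectPair_eq, weierstrassP_rectPair_eq,
    hreal, himag]
  ring

lemma integral_div_cosh_add_cos_add_integral_div_cosh_add_cos :
    (∫ t in Ioi (0 : ℝ), t / (cosh (a * t) + cos (b * t))) +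
        ∫ t in Ioi (0 : ℝ), t / (cosh (b * t) + cos (a * t)) =
      rectPair.e₁ ha hb - rectPair.e₃ ha hb := by
  have h := coshIntegral_add_coshIntegral (L := diagPair ha hb) (by simpa [diagPair])
    (by simpa [diagPair]) (by simpa [diagPair]) (by simpa [diagPair])
  have hadd : ((diagPair ha hb).ω₁ + (diagPair ha hb).ω₂) / 4 = a := by
    simp only [diagPair]; ring
  have hsub : ((diagPair ha hb).ω₁ - (diagPair ha hb).ω₂) / 4 = b * Complex.I := by
    simp only [diagPair]; ring
  have hα : (diagPair ha hb).ω₁ / 4 = (a + b * Complex.I) / 2 := by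
    simp only [diagPair]; ring
  have hβ : (diagPair ha hb).ω₂ / 4 = (a - b * Complex.I) / 2 := by
    simp only [diagPair]; ring
  have hα' : -Complex.I * ((a + b * Complex.I) / 2) = (b + (-a : ℝ) * Complex.I) / 2 := by
    push_cast; linear_combination (-b / 2 : ℂ) * Complex.I_sq
  have hβ' : Complex.I * ((a - b * Complex.I) / 2) = (b - (-a : ℝ) * Complex.I) / 2 := by
    push_cast; linear_combination (-b / 2 : ℂ) * Complex.I_sq
  rw [hadd, hsub, hα, hβ, hα', hβ', coshIntegral_half_add_half_sub,
    coshIntegral_half_add_half_sub] at h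
  simp only [neg_mul, cos_neg] at h
  have he := e₁_sub_e₃_eq_weierstrassP_diagPair ha hb
  rw [← h, mul_add, mul_div_cancel₀ _ two_ne_zero, mul_div_cancel₀ _ two_ne_zero] at he
  exact_mod_cast he.symm

end DiagPair

lemma integral_Ioi_comp_sqrt (f : ℝ → ℝ) :
    ∫ x in Ioi (0 : ℝ), f √x = 2 * ∫ t in Ioi (0 : ℝ), t * f t := by
  rw [← integral_comp_rpow_Ioi_of_pos two_pos, ← integral_const_mul]
  refine setIntegral_congr_fun measurableSet_Ioi fun t ht => ?_
  rw [rpow_ofNat, sqrt_sq (le_of_lt ht), show (2 : ℝ) - 1 = 1 by norm_num, rpow_one, smul_eq_mul,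
    mul_assoc]

lemma integral_one_div_cos_add_cosh_sqrt {a b : ℝ} (ha : 0 < a) (hb : 0 < b) :
    (∫ x in Ioi (0 : ℝ), 1 / (cos (a * √x) + cosh (b * √x))) +
        ∫ x in Ioi (0 : ℝ), 1 / (cosh (a * √x) + cos (b * √x)) =
      2 * (rectPair.e₁ ha hb - rectPair.e₃ ha hb) := by
  rw [integral_Ioi_comp_sqrt fun t => 1 / (cos (a * t) + cosh (b * t)),
    integral_Ioi_comp_sqrt fun t => 1 / (cosh (a * t) + cos (b * t)), ← mul_add,
    ← integral_div_cosh_add_cos_add_integral_div_cosh_add_cos ha hb, add_comm]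
  simp only [mul_one_div, add_comm (cos (a * _))]

theorem ismail_valent_integral (k : ℝ) (hk : k ∈ Set.Ioo (0 : ℝ) 1) :
    ((∫ x in Set.Ioi (0 : ℝ), 1 /
        (Real.cos (ellipticK k * Real.sqrt x) +
          Real.cosh (ellipticK (Real.sqrt (1 - k ^ 2)) * Real.sqrt x)))
      + (∫ x in Set.Ioi (0 : ℝ), 1 /
        (Real.cosh (ellipticK k * Real.sqrt x) +
          Real.cos (ellipticK (Real.sqrt (1 - k ^ 2)) * Real.sqrt x))) = 2) ∧
    Iplus k 0 = 1 := by
  have ha : 0 < ellipticK k := ellipticK_pos (by nlinarith [hk.1, hk.2])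
  have hb : 0 < ellipticK √(1 - k ^ 2) := by
    have := sqrt_one_sub_sq_mem_Ioo hk
    exact ellipticK_pos (by nlinarith [this.1, this.2])
  have hmain := integral_one_div_cos_add_cosh_sqrt ha hb
  rw [rectPair.e₁_sub_e₃_eq_one ha hb hk rfl rfl, mul_one] at hmain
  refine ⟨hmain, ?_⟩
  simp only [Iplus, pow_zero]
  linarith
end
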